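/- Let w, w′ ∈ Sₙ and k ≤ n with w →_{r[k,m]} w′, witnessed by a₁,b₁,…,a_m,b_m with aᵢ ≤ k < bᵢ, w′ = w·t_{a₁,b₁}⋯t_{a_m,b_m}, ℓ(w·t_{a₁,b₁}⋯t_{aᵢ,bᵢ}) = ℓ(w)+i for all i, and b₁,…,b_m distinct. For 1 ≤ j ≤ k set r_j = #{i : aᵢ = j}, μ_j = r_{j+1} + ⋯ + r_k, and λ_j = μ_j + r_j (so λ ⊃ μ are partitions with at most k parts and λ/μ is a skew row of length m whose j-th row has length r_j). Then for every partition ν with at most k parts and ν₁ ≤ n−k, the structure constant c^{w′}_{w, w(ν)} equals the Littlewood–Richardson coefficient c^λ_{μ,ν}. -/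

import Mathlib

open Equiv MvPolynomial

attribute [local instance] Classical.propDecidable

namespace SchubertPieri

/-- Position `j ∈ {1,…,N}` (1-indexed) as an element of `Fin N` (0-indexed). -/
def pos (N : ℕ) [NeZero N] (j : ℕ) : Fin N :=
  ⟨(j - 1) % N, Nat.mod_lt _ (Nat.pos_of_ne_zero (NeZero.ne N))⟩

/-- The transposition `t_{a,b}` interchanging positions `a` and `b` (1-indexed). -/
def t (N : ℕ) [NeZero N] (a b : ℕ) : Equiv.Perm (Fin N) :=
  Equiv.swap (pos N a) (pos N b)

/-- The value `w(j)` for `j ∈ {1,…,N}` (1-indexed). -/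
def val {N : ℕ} [NeZero N] (w : Equiv.Perm (Fin N)) (j : ℕ) : ℕ :=
  (w (pos N j) : ℕ) + 1

/-- The length of `w`: its number of inversions. -/
def len {N : ℕ} (w : Equiv.Perm (Fin N)) : ℕ :=
  (Finset.univ.filter fun p : Fin N × Fin N => p.1 < p.2 ∧ w p.2 < w p.1).card

/-- The longest permutation `w₀ : j ↦ N+1-j`. -/
def w0 (N : ℕ) : Equiv.Perm (Fin N) :=
  ⟨Fin.rev, Fin.rev, Fin.rev_rev, Fin.rev_rev⟩

/-- The product `t_{a 0, b 0} ⋯ t_{a (i-1), b (i-1)}`. -/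
def tProd (N : ℕ) [NeZero N] (a b : ℕ → ℕ) (i : ℕ) : Equiv.Perm (Fin N) :=
  ((List.range i).map fun j => t N (a j) (b j)).prod

/-- `r[k,m] = t_{k,k+1} t_{k,k+2} ⋯ t_{k,k+m}`, the (m+1)-cycle with
`r[k,m](k) = k+m` and `r[k,m](j) = j-1` for `k+1 ≤ j ≤ k+m`. -/
def rPerm (N k m : ℕ) [NeZero N] : Equiv.Perm (Fin N) :=
  ((List.range m).map fun i => t N k (k + 1 + i)).prod

/-- `c[k,m] = t_{k,k+1} t_{k-1,k+1} ⋯ t_{k-m+1,k+1}`, the (m+1)-cycle with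
`c[k,m](j) = j+1` for `k-m+1 ≤ j ≤ k` and `c[k,m](k+1) = k-m+1`. -/
def cPerm (N k m : ℕ) [NeZero N] : Equiv.Perm (Fin N) :=
  ((List.range m).map fun i => t N (k - i) (k + 1)).prod

/-- The conditions that `aᵢ ≤ k < bᵢ` (with all indices in `{1,…,N}`) and that
`ℓ(w t_{a₁ b₁} ⋯ t_{aᵢ bᵢ}) = ℓ(w) + i` for `1 ≤ i ≤ m`. -/
def StepOK (N k m : ℕ) [NeZero N] (w : Equiv.Perm (Fin N)) (a b : ℕ → ℕ) : Prop :=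
  (∀ i, i < m → 1 ≤ a i ∧ a i ≤ k ∧ k < b i ∧ b i ≤ N) ∧
  (∀ i, i ≤ m → len (w * tProd N a b i) = len w + i)

/-- `w →_{r[k,m]} w'`. -/
def RelR (N k m : ℕ) [NeZero N] (w w' : Equiv.Perm (Fin N)) : Prop :=
  ∃ a b : ℕ → ℕ, StepOK N k m w a b ∧ w' = w * tProd N a b m ∧
    (∀ i j, i < m → j < m → i ≠ j → b i ≠ b j)

/-- `w →_{c[k,m]} w'`. -/
def RelC (N k m : ℕ) [NeZero N] (w w' : Equiv.Perm (Fin N)) : Prop :=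
  ∃ a b : ℕ → ℕ, StepOK N k m w a b ∧ w' = w * tProd N a b m ∧
    (∀ i j, i < m → j < m → i ≠ j → a i ≠ a j)

/-- The divided difference operator `∂ᵢ f = (f - sᵢ·f)/(xᵢ - xᵢ₊₁)` (1-indexed `i`);
the quotient is exact, and is recovered here as the (unique) witness of divisibility. -/
noncomputable def divDiff {N : ℕ} [NeZero N] (i : ℕ) (f : MvPolynomial (Fin N) ℤ) :
    MvPolynomial (Fin N) ℤ :=
  if h : (X (pos N i) - X (pos N (i + 1))) ∣ (f - rename (⇑(t N i (i + 1))) f) then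
    h.choose
  else 0

/-- `∂_{a₁} ∘ ⋯ ∘ ∂_{a_p}` applied to `f`, for a word `l = [a₁,…,a_p]`. -/
noncomputable def divDiffWord {N : ℕ} [NeZero N] (l : List ℕ) (f : MvPolynomial (Fin N) ℤ) :
    MvPolynomial (Fin N) ℤ :=
  l.foldr divDiff f

/-- Auxiliary: produce a reduced word for `w` by repeatedly removing a descent. -/
def redWordAux (N : ℕ) [NeZero N] : ℕ → Equiv.Perm (Fin N) → List ℕ
  | 0, _ => []
  | fuel + 1, w =>
    match ((List.range (N - 1)).map (· + 1)).find? (fun i => decide (val w (i + 1) < val w i)) with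
    | none => []
    | some i => redWordAux N fuel (w * t N i (i + 1)) ++ [i]

/-- A canonical reduced word `(a₁,…,a_p)` for `w`, i.e. `w = s_{a₁} ⋯ s_{a_p}` with `p = ℓ(w)`. -/
def redWord (N : ℕ) [NeZero N] (w : Equiv.Perm (Fin N)) : List ℕ :=
  redWordAux N (N * N) w

/-- The staircase monomial `x₁^{N-1} x₂^{N-2} ⋯ x_{N-1}`. -/
noncomputable def staircase (N : ℕ) : MvPolynomial (Fin N) ℤ :=
  ∏ i : Fin N, X i ^ (N - 1 - (i : ℕ))

/-- The Schubert polynomial `𝔖_w = ∂_{w⁻¹w₀}(x₁^{N-1} ⋯ x_{N-1})`. -/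
noncomputable def schubertPoly (N : ℕ) [NeZero N] (w : Equiv.Perm (Fin N)) :
    MvPolynomial (Fin N) ℤ :=
  divDiffWord (redWord N (w⁻¹ * w0 N)) (staircase N)

/-- The ideal of `Rₙ` generated by the symmetric polynomials with zero constant term. -/
noncomputable def symIdeal (N : ℕ) : Ideal (MvPolynomial (Fin N) ℤ) :=
  Ideal.span {f : MvPolynomial (Fin N) ℤ | f.IsSymmetric ∧ constantCoeff f = 0}

/-- The ring `Hₙ = Rₙ/𝒮`. -/
abbrev HRing (N : ℕ) := MvPolynomial (Fin N) ℤ ⧸ symIdeal N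

/-- The class of the Schubert polynomial `𝔖_w` in `Hₙ`. -/
noncomputable def SS (N : ℕ) [NeZero N] (w : Equiv.Perm (Fin N)) : HRing N :=
  Ideal.Quotient.mk (symIdeal N) (schubertPoly N w)

/-- The complete homogeneous symmetric polynomial of degree `m` in `x₁,…,x_k`. -/
noncomputable def hPoly (N k m : ℕ) : MvPolynomial (Fin N) ℤ :=
  ∑ s ∈ (Finset.univ.filter fun i : Fin N => (i : ℕ) < k).sym m,
    (Multiset.map X (s : Multiset (Fin N))).prod

/-- The elementary symmetric polynomial of degree `m` in `x₁,…,x_k`. -/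
noncomputable def ePoly (N k m : ℕ) : MvPolynomial (Fin N) ℤ :=
  ∑ s ∈ (Finset.univ.filter fun i : Fin N => (i : ℕ) < k).powersetCard m, ∏ i ∈ s, X i

/-- Covering relation of the `k`-Bruhat order. -/
def kCover (N k : ℕ) [NeZero N] (w w' : Equiv.Perm (Fin N)) : Prop :=
  ∃ a b : ℕ, 1 ≤ a ∧ a ≤ k ∧ k < b ∧ b ≤ N ∧ w' = w * t N a b ∧ len w' = len w + 1

/-- The (strict) `k`-Bruhat order `<ₖ`. -/
def kBruhat (N k : ℕ) [NeZero N] : Equiv.Perm (Fin N) → Equiv.Perm (Fin N) → Prop :=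
  Relation.TransGen (kCover N k)

/-- The label `w⁽ⁱ⁺¹⁾(a_{i+1})` (0-indexed `i`) of the `(i+1)`-st step of a path. -/
def label {N : ℕ} [NeZero N] (w : Equiv.Perm (Fin N)) (a b : ℕ → ℕ) (i : ℕ) : ℕ :=
  val (w * tProd N a b (i + 1)) (a i)

/-- `(a,b)` encodes a path of length `m` in the `k`-Bruhat order from `w` to `w'`
(normalized so that `a i = b i = 0` for `i ≥ m`, making the encoding unique). -/
def PathWit (N k m : ℕ) [NeZero N] (w w' : Equiv.Perm (Fin N))
    (ab : (ℕ → ℕ) × (ℕ → ℕ)) : Prop :=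
  StepOK N k m w ab.1 ab.2 ∧ w' = w * tProd N ab.1 ab.2 m ∧
    ∀ i, m ≤ i → ab.1 i = 0 ∧ ab.2 i = 0

/-- Paths of length `m` in the `k`-Bruhat order from `w` to `w'` with strictly
increasing labels. -/
def IncPaths (N k m : ℕ) [NeZero N] (w w' : Equiv.Perm (Fin N)) :
    Set ((ℕ → ℕ) × (ℕ → ℕ)) :=
  {ab | PathWit N k m w w' ab ∧
    ∀ i j, i < j → j < m → label w ab.1 ab.2 i < label w ab.1 ab.2 j}

/-- Paths of length `m` in the `k`-Bruhat order from `w` to `w'` with strictly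
decreasing labels. -/
def DecPaths (N k m : ℕ) [NeZero N] (w w' : Equiv.Perm (Fin N)) :
    Set ((ℕ → ℕ) × (ℕ → ℕ)) :=
  {ab | PathWit N k m w w' ab ∧
    ∀ i j, i < j → j < m → label w ab.1 ab.2 j < label w ab.1 ab.2 i}


/-- The cycle `(x₁ x₂ … x_r)` (sending `x₁ ↦ x₂ ↦ ⋯ ↦ x_r ↦ x₁`), as a product
of transpositions. -/
def cycleList (N : ℕ) [NeZero N] (l : List ℕ) : Equiv.Perm (Fin N) :=
  ((l.zip l.tail).map fun p => t N p.1 p.2).prod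

/-- The Grassmannian permutation `h[k;p,q]` of descent `k` and hook shape `(p,1^{q-1})`:
the `(p+q)`-cycle `(k-q+1  k-q+2 … k  k+p  k+p-1 … k+1)`. -/
def hookPerm (N k p q : ℕ) [NeZero N] : Equiv.Perm (Fin N) :=
  cycleList N (((List.range q).map fun i => k - q + 1 + i) ++
    ((List.range p).reverse.map fun i => k + 1 + i))

/-- `w|ₚ ∈ S_{N-1}`: delete row `p` and column `w(p)` from the permutation matrix of `w`. -/
def drop {N : ℕ} (w : Equiv.Perm (Fin (N + 1))) (p : Fin (N + 1)) : Equiv.Perm (Fin N) :=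
  Equiv.removeNone (((finSuccEquiv' p).symm.trans (w : Fin (N + 1) ≃ Fin (N + 1))).trans
    (finSuccEquiv' (w p)))

/-- `lam` is a partition with at most `k` parts (1-indexed parts `lam 1 ≥ lam 2 ≥ ⋯`,
normalized by `lam 0 = 0`). -/
def IsPartFun (k : ℕ) (lam : ℕ → ℕ) : Prop :=
  lam 0 = 0 ∧ (∀ j, 1 ≤ j → lam (j + 1) ≤ lam j) ∧ ∀ j, k < j → lam j = 0

/-- `h_d(x₁,…,x_k)` for an integer `d`, with `h_d = 0` for `d < 0`. -/
noncomputable def hPolyZ (N k : ℕ) (d : ℤ) : MvPolynomial (Fin N) ℤ :=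
  if 0 ≤ d then hPoly N k d.toNat else 0

/-- The Schur polynomial `s_λ(x₁,…,x_k)`, via the Jacobi–Trudi determinant
`det(h_{λᵢ+j-i})_{1 ≤ i,j ≤ k}`. -/
noncomputable def schurPoly (N k : ℕ) (lam : ℕ → ℕ) : MvPolynomial (Fin N) ℤ :=
  (Matrix.of fun i j : Fin k =>
    hPolyZ N k ((lam ((i : ℕ) + 1) : ℤ) + (j : ℕ) - (i : ℕ))).det

/-- `r_j = #{i : aᵢ = j}` (with `i` ranging over `0,…,m-1`, 0-indexed). -/
def rJ (a : ℕ → ℕ) (m j : ℕ) : ℕ := ((Finset.range m).filter fun i => a i = j).card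

/-- `μ_j = r_{j+1} + ⋯ + r_k`. -/
def muJ (a : ℕ → ℕ) (m k j : ℕ) : ℕ :=
  if j = 0 then 0 else ∑ j' ∈ Finset.Icc (j + 1) k, rJ a m j'

/-- `λ_j = μ_j + r_j`. -/
def lamJ (a : ℕ → ℕ) (m k j : ℕ) : ℕ :=
  if j = 0 then 0 else muJ a m k j + rJ a m j

/-- `d_j = #{i : bᵢ = N+1-j}` (with `i` ranging over `0,…,m-1`, 0-indexed). -/
def dJ (b : ℕ → ℕ) (m N j : ℕ) : ℕ :=
  ((Finset.range m).filter fun i => b i = N + 1 - j).card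

/-- `μ′_j = d_{j+1} + ⋯ + d_{N-k}`. -/
def muJ' (b : ℕ → ℕ) (m N k j : ℕ) : ℕ :=
  if j = 0 then 0 else ∑ j' ∈ Finset.Icc (j + 1) (N - k), dJ b m N j'

/-- `λ′_j = μ′_j + d_j`. -/
def lamJ' (b : ℕ → ℕ) (m N k j : ℕ) : ℕ :=
  if j = 0 then 0 else muJ' b m N k j + dJ b m N j

/-- The conjugate (transpose) partition: `νᵗ_j = #{i : νᵢ ≥ j}`, for `ν` with at
most `k` parts. -/
def conjPart (k : ℕ) (nu : ℕ → ℕ) (j : ℕ) : ℕ :=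
  if j = 0 then 0 else ((Finset.Icc 1 k).filter fun i => j ≤ nu i).card

/-- `wv` is the Grassmannian permutation of descent `k` and shape `nu`:
`wv(j) = j + ν_{k+1-j}` for `1 ≤ j ≤ k`, and `wv` is increasing on `{k+1,…,N}`. -/
def IsGrassOf (N k : ℕ) [NeZero N] (nu : ℕ → ℕ) (wv : Equiv.Perm (Fin N)) : Prop :=
  (∀ j, 1 ≤ j → j ≤ k → val wv j = j + nu (k + 1 - j)) ∧
  (∀ j, k < j → j < N → val wv j < val wv (j + 1))

/-- Paths of length `m` in the `k`-Bruhat order from `w` to `w'` whose labels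
increase strictly for the first `p` steps and decrease strictly thereafter
(positions `p, p+1, …, m` being decreasing, 1-indexed). -/
def IncDecPaths (N k m p : ℕ) [NeZero N] (w w' : Equiv.Perm (Fin N)) :
    Set ((ℕ → ℕ) × (ℕ → ℕ)) :=
  {ab | PathWit N k m w w' ab ∧
    (∀ i j, i < j → j < p → label w ab.1 ab.2 i < label w ab.1 ab.2 j) ∧
    (∀ i j, p - 1 ≤ i → i < j → j < m → label w ab.1 ab.2 j < label w ab.1 ab.2 i)}

/-- Paths of length `m` in the `k`-Bruhat order from `w` to `w'` whose labels
decrease strictly for the first `q` steps and increase strictly thereafter. -/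
def DecIncPaths (N k m q : ℕ) [NeZero N] (w w' : Equiv.Perm (Fin N)) :
    Set ((ℕ → ℕ) × (ℕ → ℕ)) :=
  {ab | PathWit N k m w w' ab ∧
    (∀ i j, i < j → j < q → label w ab.1 ab.2 j < label w ab.1 ab.2 i) ∧
    (∀ i j, q - 1 ≤ i → i < j → j < m → label w ab.1 ab.2 i < label w ab.1 ab.2 j)}

/-!
The coefficient of `𝔖_u` in the class of `f` is the constant term of `∂_u f`, so everything reduces
to computing `∂_{w'} (f 𝔖_w)` at the origin for `f = 𝔖_{w(ν)}`. Symmetrizing the bialternant formula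
over the first `k` variables identifies `𝔖_{w(ν)}` with the Schur polynomial `s_ν(x₁, …, x_k)`.

For `w' = w t_{a₁,b₁} ⋯ t_{a_m,b_m}` as in the theorem and any `f ∈ ℤ[x₁, …, x_k]`, the coefficient
of `𝔖_{w'}` in `f 𝔖_w` is the coefficient of the monomial `x_{a₁} ⋯ x_{a_m}` in `f`: this follows
from Monk's rule for `x_p 𝔖_w`, because the `b_i` are distinct. The bialternant formula for
`s_μ s_ν` shows that for a skew row `λ/μ` the number `c^λ_{μ,ν}` is the coefficient of that same
monomial `∏ x_j ^ (λ_j - μ_j)` in `s_ν`.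
-/

/-! ### Divided differences -/

section DividedDifference

variable {σ R : Type*}

section

variable [DecidableEq σ]

lemma swap_mul_swap_comm {p q r s : σ} (hpr : p ≠ r) (hps : p ≠ s) (hqr : q ≠ r) (hqs : q ≠ s) :
    swap p q * swap r s = swap r s * swap p q := by
  rw [mul_swap_eq_swap_mul, swap_apply_of_ne_of_ne hpr.symm hqr.symm,
    swap_apply_of_ne_of_ne hps.symm hqs.symm]

lemma swap_mul_swap_mul_swap_braid {p q r : σ} (hpq : p ≠ q) (hqr : q ≠ r) (hpr : p ≠ r) :
    swap p q * swap q r * swap p q = swap q r * swap p q * swap q r := by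
  rw [swap_mul_swap_mul_swap hpq hpr, swap_comm p q, swap_comm q r,
    swap_mul_swap_mul_swap hqr.symm hpr.symm, swap_comm]

end

variable [CommRing R]

lemma X_sub_X_ne_zero [Nontrivial R] {p q : σ} (h : p ≠ q) :
    (X p - X q : MvPolynomial σ R) ≠ 0 :=
  sub_ne_zero.mpr (X_injective.ne h)

lemma rename_rename_perm (g h : Perm σ) (f : MvPolynomial σ R) :
    rename g (rename h f) = rename (g * h) f :=
  rename_rename _ _ _

variable [DecidableEq σ]

lemma X_sub_X_dvd_sub_rename_swap (p q : σ) (f : MvPolynomial σ R) :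
    (X p - X q) ∣ f - rename (swap p q) f := by
  induction f using MvPolynomial.induction_on with
  | C a => simp
  | add f g hf hg =>
    rw [map_add, add_sub_add_comm]
    exact dvd_add hf hg
  | mul_X f i hf =>
    have leibniz : f * X i - rename (swap p q) (f * X i) =
        (f - rename (swap p q) f) * X i + rename (swap p q) f * (X i - X (swap p q i)) := by
      rw [map_mul, rename_X]
      ring
    rw [leibniz]
    refine dvd_add (hf.mul_right _) (Dvd.dvd.mul_left ?_ _)
    obtain rfl | hp := eq_or_ne i p
    · rw [swap_apply_left]
    obtain rfl | hq := eq_or_ne i q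
    · rw [swap_apply_right]
      exact dvd_sub_comm.mp dvd_rfl
    · rw [swap_apply_of_ne_of_ne hp hq, sub_self]
      exact dvd_zero _

lemma rename_swap_rename_swap (p q : σ) (f : MvPolynomial σ R) :
    rename (swap p q) (rename (swap p q) f) = f := by
  rw [rename_rename_perm, swap_mul_self, Perm.coe_one, rename_id_apply]

variable [IsDomain R]

/-- The divided difference operator `f ↦ (f - t·f) / (x_p - x_q)`, where `t` interchanges `x_p` and
`x_q`; it is the zero map when `p = q`. The operators `∂ᵢ` are those at adjacent positions. -/
noncomputable def divDiffAt (p q : σ) : MvPolynomial σ R →ₗ[R] MvPolynomial σ R :=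
  if h : p = q then 0
  else
    { toFun := fun f => (X_sub_X_dvd_sub_rename_swap p q f).choose
      map_add' := fun f g => mul_left_cancel₀ (X_sub_X_ne_zero h) <| by
        rw [mul_add, ← (X_sub_X_dvd_sub_rename_swap p q (f + g)).choose_spec,
          ← (X_sub_X_dvd_sub_rename_swap p q f).choose_spec,
          ← (X_sub_X_dvd_sub_rename_swap p q g).choose_spec, map_add, add_sub_add_comm]
      map_smul' := fun c f => mul_left_cancel₀ (X_sub_X_ne_zero h) <| by
        rw [RingHom.id_apply, mul_smul_comm,
          ← (X_sub_X_dvd_sub_rename_swap p q (c • f)).choose_spec,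
          ← (X_sub_X_dvd_sub_rename_swap p q f).choose_spec, map_smul, smul_sub] }

lemma X_sub_X_mul_divDiffAt (p q : σ) (f : MvPolynomial σ R) :
    (X p - X q) * divDiffAt p q f = f - rename (swap p q) f := by
  obtain rfl | h := eq_or_ne p q
  · simp
  · rw [divDiffAt, dif_neg h]
    exact (X_sub_X_dvd_sub_rename_swap p q f).choose_spec.symm

lemma divDiffAt_self (p : σ) : (divDiffAt p p : MvPolynomial σ R →ₗ[R] _) = 0 :=
  dif_pos rfl

lemma divDiffAt_eq_of_mul_eq {p q : σ} (h : p ≠ q) {f g : MvPolynomial σ R}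
    (hg : (X p - X q) * g = f - rename (swap p q) f) : divDiffAt p q f = g :=
  mul_left_cancel₀ (X_sub_X_ne_zero h) ((X_sub_X_mul_divDiffAt p q f).trans hg.symm)

lemma divDiffAt_mul (p q : σ) (f g : MvPolynomial σ R) :
    divDiffAt p q (f * g) = rename (swap p q) f * divDiffAt p q g + divDiffAt p q f * g := by
  obtain rfl | h := eq_or_ne p q
  · simp [divDiffAt_self]
  apply divDiffAt_eq_of_mul_eq h
  rw [map_mul]
  linear_combination rename (swap p q) f * X_sub_X_mul_divDiffAt p q g
    + g * X_sub_X_mul_divDiffAt p q f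

lemma divDiffAt_eq_zero_of_rename_eq {p q : σ} {f : MvPolynomial σ R}
    (hf : rename (swap p q) f = f) : divDiffAt p q f = 0 := by
  obtain rfl | h := eq_or_ne p q
  · simp [divDiffAt_self]
  · exact divDiffAt_eq_of_mul_eq h (by rw [hf, sub_self, mul_zero])

lemma divDiffAt_mul_of_rename_eq {p q : σ} {f : MvPolynomial σ R}
    (hf : rename (swap p q) f = f) (g : MvPolynomial σ R) :
    divDiffAt p q (f * g) = f * divDiffAt p q g := by
  rw [divDiffAt_mul, hf, divDiffAt_eq_zero_of_rename_eq hf, zero_mul, add_zero]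

lemma rename_divDiffAt (p q : σ) (f : MvPolynomial σ R) :
    rename (swap p q) (divDiffAt p q f) = divDiffAt p q f := by
  obtain rfl | h := eq_or_ne p q
  · simp [divDiffAt_self]
  have swapped := congrArg (rename (swap p q)) (X_sub_X_mul_divDiffAt p q f)
  rw [map_mul, map_sub, map_sub, rename_X, rename_X, swap_apply_left, swap_apply_right,
    rename_swap_rename_swap] at swapped
  apply mul_left_cancel₀ (X_sub_X_ne_zero h)
  linear_combination -swapped - X_sub_X_mul_divDiffAt p q f

lemma divDiffAt_divDiffAt_self (p q : σ) (f : MvPolynomial σ R) :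
    divDiffAt p q (divDiffAt p q f) = 0 :=
  divDiffAt_eq_zero_of_rename_eq (rename_divDiffAt p q f)

lemma divDiffAt_rename (p q : σ) (f : MvPolynomial σ R) :
    divDiffAt p q (rename (swap p q) f) = -divDiffAt p q f := by
  obtain rfl | h := eq_or_ne p q
  · simp [divDiffAt_self]
  apply divDiffAt_eq_of_mul_eq h
  rw [rename_swap_rename_swap]
  linear_combination -X_sub_X_mul_divDiffAt p q f

lemma divDiffAt_swap_args (p q : σ) (f : MvPolynomial σ R) :
    divDiffAt q p f = -divDiffAt p q f := by
  obtain rfl | h := eq_or_ne p q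
  · simp [divDiffAt_self]
  apply divDiffAt_eq_of_mul_eq h.symm
  rw [swap_comm q p]
  linear_combination X_sub_X_mul_divDiffAt p q f

lemma divDiffAt_X_left {p q : σ} (h : p ≠ q) : divDiffAt p q (X p : MvPolynomial σ R) = 1 :=
  divDiffAt_eq_of_mul_eq h (by simp)

lemma divDiffAt_X_right {p q : σ} (h : p ≠ q) : divDiffAt p q (X q : MvPolynomial σ R) = -1 :=
  divDiffAt_eq_of_mul_eq h (by simp)

lemma divDiffAt_X_of_ne {p q j : σ} (hp : j ≠ p) (hq : j ≠ q) :
    divDiffAt p q (X j : MvPolynomial σ R) = 0 :=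
  divDiffAt_eq_zero_of_rename_eq (by rw [rename_X, swap_apply_of_ne_of_ne hp hq])

lemma divDiffAt_comm {p q r s : σ} (hpr : p ≠ r) (hps : p ≠ s) (hqr : q ≠ r) (hqs : q ≠ s)
    (f : MvPolynomial σ R) :
    divDiffAt p q (divDiffAt r s f) = divDiffAt r s (divDiffAt p q f) := by
  obtain rfl | hpq := eq_or_ne p q
  · simp [divDiffAt_self]
  obtain rfl | hrs := eq_or_ne r s
  · simp [divDiffAt_self]
  have swapped_rs := congrArg (rename (swap p q)) (X_sub_X_mul_divDiffAt r s f)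
  have swapped_pq := congrArg (rename (swap r s)) (X_sub_X_mul_divDiffAt p q f)
  have swaps_comm := swap_mul_swap_comm hpr hps hqr hqs
  simp only [map_mul, map_sub, rename_X, swap_apply_of_ne_of_ne hpr.symm hqr.symm,
    swap_apply_of_ne_of_ne hps.symm hqs.symm, rename_rename_perm] at swapped_rs
  simp only [map_mul, map_sub, rename_X, swap_apply_of_ne_of_ne hpr hps,
    swap_apply_of_ne_of_ne hqr hqs, rename_rename_perm, ← swaps_comm] at swapped_pq
  apply mul_left_cancel₀ (X_sub_X_ne_zero hpq)
  apply mul_left_cancel₀ (X_sub_X_ne_zero hrs)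
  linear_combination (X r - X s) * X_sub_X_mul_divDiffAt p q (divDiffAt r s f)
    - (X p - X q) * X_sub_X_mul_divDiffAt r s (divDiffAt p q f)
    + X_sub_X_mul_divDiffAt r s f - X_sub_X_mul_divDiffAt p q f - swapped_rs + swapped_pq

lemma vandermonde_mul_divDiffAt_divDiffAt_divDiffAt {p q r : σ} (hpq : p ≠ q) (hqr : q ≠ r)
    (hpr : p ≠ r) (f : MvPolynomial σ R) :
    (X p - X q) * (X p - X r) * (X q - X r) * divDiffAt p q (divDiffAt q r (divDiffAt p q f)) =
      f - rename (swap p q) f - rename (swap q r) f + rename (swap q r * swap p q) f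
        + rename (swap p q * swap q r) f - rename (swap p q * swap q r * swap p q) f := by
  have swapped := congrArg (rename (swap q r)) (X_sub_X_mul_divDiffAt p q f)
  rw [map_mul, map_sub, map_sub, rename_X, rename_X, swap_apply_of_ne_of_ne hpq hpr,
    swap_apply_left, rename_rename_perm] at swapped
  have second : (X p - X q) * (X p - X r) * (X q - X r) * divDiffAt q r (divDiffAt p q f) =
      (X p - X r) * (f - rename (swap p q) f)
        - (X p - X q) * (rename (swap q r) f - rename (swap q r * swap p q) f) := by
    linear_combination
      (X p - X q) * (X p - X r) * X_sub_X_mul_divDiffAt q r (divDiffAt p q f)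
        + (X p - X r) * X_sub_X_mul_divDiffAt p q f - (X p - X q) * swapped
  have second_swapped := congrArg (rename (swap p q)) second
  simp only [map_mul, map_sub, rename_X, swap_apply_left, swap_apply_right,
    swap_apply_of_ne_of_ne hpr.symm hqr.symm, rename_swap_rename_swap,
    rename_rename_perm (swap p q) (swap q r), rename_rename_perm (swap p q) (swap q r * swap p q),
    ← mul_assoc] at second_swapped
  apply mul_left_cancel₀ (X_sub_X_ne_zero hpq)
  linear_combination (X p - X q) * (X p - X r) * (X q - X r)
    * X_sub_X_mul_divDiffAt p q (divDiffAt q r (divDiffAt p q f)) + second + second_swapped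

lemma divDiffAt_braid {p q r : σ} (hpq : p ≠ q) (hqr : q ≠ r) (hpr : p ≠ r)
    (f : MvPolynomial σ R) :
    divDiffAt p q (divDiffAt q r (divDiffAt p q f)) =
      divDiffAt q r (divDiffAt p q (divDiffAt q r f)) := by
  have left := vandermonde_mul_divDiffAt_divDiffAt_divDiffAt hpq hqr hpr f
  have right := vandermonde_mul_divDiffAt_divDiffAt_divDiffAt hqr.symm hpq.symm hpr.symm f
  simp only [divDiffAt_swap_args q r, divDiffAt_swap_args p q, map_neg, swap_comm r q,
    swap_comm q p] at right
  rw [swap_mul_swap_mul_swap_braid hpq hqr hpr] at left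
  apply mul_left_cancel₀ (X_sub_X_ne_zero hpq)
  apply mul_left_cancel₀ (X_sub_X_ne_zero hqr)
  apply mul_left_cancel₀ (X_sub_X_ne_zero hpr)
  linear_combination left - right

end DividedDifference

/-! ### Codes, length and descents -/

section Length

variable {N : ℕ}

lemma swap_lt_swap {p q x y : Fin N} (hpq : p ⋖ q) (hxy : x < y) (h : ¬(x = p ∧ y = q)) :
    swap p q x < swap p q y := by
  have le_p : ∀ {z}, z < q → z ≤ p := hpq.le_of_lt
  have q_le : ∀ {z}, p < z → q ≤ z := hpq.ge_of_gt
  have p_lt_q : p < q := hpq.lt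
  simp only [swap_apply_def]
  grind

lemma lt_swap_apply_iff {p q x y : Fin N} (hpq : p ⋖ q) (hp : ¬(x = p ∧ y = p))
    (hq : ¬(x = q ∧ y = q)) : x < swap p q y ↔ swap p q x < y := by
  refine ⟨fun h => ?_, fun h => ?_⟩
  · simpa using swap_lt_swap hpq h (by rwa [swap_apply_eq_iff, swap_apply_right])
  · simpa using swap_lt_swap hpq h (by rwa [swap_apply_eq_iff, swap_apply_left])

/-- The Lehmer code of `w`: its value at `p` counts the inversions of `w` with first position
`p`. -/
def lehmerCode (w : Perm (Fin N)) (p : Fin N) : ℕ :=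
  (Finset.univ.filter fun r => p < r ∧ w r < w p).card

lemma sum_lehmerCode (w : Perm (Fin N)) : ∑ p, lehmerCode w p = len w := by
  simp only [lehmerCode, len, Finset.card_filter, Fintype.sum_prod_type]

lemma lehmerCode_mul_swap (w : Perm (Fin N)) {p q : Fin N} (hpq : p ⋖ q) (hw : w p < w q)
    (r : Fin N) :
    lehmerCode (w * swap p q) r = lehmerCode w (swap p q r) + if r = p then 1 else 0 := by
  have reindexed : lehmerCode (w * swap p q) r =
      (Finset.univ.filter fun y => r < swap p q y ∧ w y < w (swap p q r)).card :=
    Finset.card_equiv (swap p q) fun i => by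
      rw [Finset.mem_filter, Finset.mem_filter]
      simp
  rw [reindexed, lehmerCode]
  split_ifs with hr
  · subst hr
    rw [← Finset.card_insert_of_notMem (a := r) (by simp [hpq.lt.le])]
    congr 1
    ext y
    obtain rfl | hy := eq_or_ne y r
    · simp [hpq.lt, hw]
    · simp [hy, lt_swap_apply_iff hpq, hpq.lt.ne]
  · rw [add_zero]
    congr 1
    ext y
    by_cases hq : r = q ∧ y = q
    · simp [hq.1, hq.2, hw.le]
    · simp [lt_swap_apply_iff hpq, hr, hq]

lemma len_mul_swap_of_lt (w : Perm (Fin N)) {p q : Fin N} (hpq : p ⋖ q) (hw : w p < w q) :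
    len (w * swap p q) = len w + 1 := by
  simp only [← sum_lehmerCode, lehmerCode_mul_swap w hpq hw, Finset.sum_add_distrib,
    Finset.sum_ite_eq', Finset.mem_univ, if_true, Equiv.sum_comp (swap p q) (lehmerCode w)]

lemma len_mul_swap_of_gt (w : Perm (Fin N)) {p q : Fin N} (hpq : p ⋖ q) (hw : w q < w p) :
    len (w * swap p q) + 1 = len w := by
  rw [← len_mul_swap_of_lt (w * swap p q) hpq (by simpa using hw), mul_swap_mul_self]

lemma mul_swap_eq_mul_swap_mul_swap_mul_swap (w : Perm (Fin N)) {c d e : Fin N} (hce : c < e)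
    (hed : e < d) : w * swap c d = w * swap c e * swap e d * swap c e := by
  rw [mul_assoc, mul_assoc, swap_comm c e, swap_comm e d, ← mul_assoc (swap e c),
    swap_mul_swap_mul_swap hed.ne' (hce.trans hed).ne']

lemma len_mul_swap_lt (w : Perm (Fin N)) {c d : Fin N} (hcd : c < d) (hw : w d < w c) :
    len (w * swap c d) < len w := by
  induction hgap : (d : ℕ) - c using Nat.strong_induction_on generalizing w c d with
  | _ gap ih =>
  obtain hcov | ⟨e, hce, hed⟩ : c ⋖ d ∨ ∃ e, c ⋖ e ∧ e < d := by
    obtain ⟨e, hce, hed⟩ := exists_covBy_le_of_lt hcd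
    obtain rfl | hed := hed.eq_or_lt
    exacts [.inl hce, .inr ⟨e, hce, hed⟩]
  · exact (len_mul_swap_of_gt w hcov hw).le
  have hce' := hce.lt
  have middle : len (w * swap c e * swap e d) < len (w * swap c e) :=
    ih _ (by omega) _ hed (by
      rwa [Perm.mul_apply, Perm.mul_apply, swap_apply_right,
        swap_apply_of_ne_of_ne hcd.ne' hed.ne']) rfl
  have values : (w * swap c e * swap e d) c = w e ∧ (w * swap c e * swap e d) e = w d := by
    simp [swap_apply_of_ne_of_ne, hce'.ne, hcd.ne, hcd.ne', hed.ne']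
  rw [mul_swap_eq_mul_swap_mul_swap_mul_swap w hce' hed]
  obtain first | first := (w.injective.ne hce'.ne).lt_or_gt <;>
  obtain last | last := (w.injective.ne hed.ne).lt_or_gt
  · exact absurd hw (first.trans last).not_gt
  · have := len_mul_swap_of_lt w hce first
    have := len_mul_swap_of_gt (w * swap c e * swap e d) hce (by rwa [values.1, values.2])
    omega
  · have := len_mul_swap_of_gt w hce first
    have := len_mul_swap_of_lt (w * swap c e * swap e d) hce (by rwa [values.1, values.2])
    omega
  · have := len_mul_swap_of_gt w hce first
    have := len_mul_swap_of_gt (w * swap c e * swap e d) hce (by rwa [values.1, values.2])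
    omega

lemma len_mul_swap_add_two_le (w : Perm (Fin N)) {c d e : Fin N} (hce : c < e) (hed : e < d)
    (hde : w d < w e) (hec : w e < w c) : len (w * swap c d) + 2 ≤ len w := by
  have hcd := hce.trans hed
  have first := len_mul_swap_lt w hce hec
  have middle := len_mul_swap_lt (w * swap c e) hed (by
    simpa [swap_apply_of_ne_of_ne hcd.ne' hed.ne'] using hde.trans hec)
  have last := len_mul_swap_lt (w * swap c e * swap e d) hce (by
    simpa [swap_apply_of_ne_of_ne, hce.ne, hcd.ne, hcd.ne', hed.ne'] using hde)
  rw [mul_swap_eq_mul_swap_mul_swap_mul_swap w hce hed]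
  omega

lemma apply_lt_apply_of_len_mul_swap_lt {w : Perm (Fin N)} {c d : Fin N} (hcd : c < d)
    (h : len (w * swap c d) < len w) : w d < w c := by
  by_contra! hle
  have hlt : w c < w d := hle.lt_of_ne (w.injective.ne hcd.ne)
  have := len_mul_swap_lt (w * swap c d) hcd (by simpa using hlt)
  rw [mul_swap_mul_self] at this
  omega

lemma not_between_of_len_mul_swap_add_one {w : Perm (Fin N)} {c d e : Fin N}
    (h : len (w * swap c d) + 1 = len w) (hce : c < e) (hed : e < d) :
    ¬(w d < w e ∧ w e < w c) := fun ⟨hde, hec⟩ => by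
  have := len_mul_swap_add_two_le w hce hed hde hec
  omega

/-- The lifting property of the Bruhat order, for covers by transpositions. -/
lemma descent_mul_swap_of_len_add_one {w : Perm (Fin N)} {p q c d : Fin N} (hpq : p ⋖ q)
    (hw : w q < w p) (hcd : c < d) (hne : ¬(c = p ∧ d = q))
    (h : len (w * swap c d) + 1 = len w) : (w * swap c d) q < (w * swap c d) p := by
  have hdc := apply_lt_apply_of_len_mul_swap_lt (w := w) hcd (by omega)
  have hp : c < p → p < d → ¬(w d < w p ∧ w p < w c) := not_between_of_len_mul_swap_add_one h
  have hq : c < q → q < d → ¬(w d < w q ∧ w q < w c) := not_between_of_len_mul_swap_add_one h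
  have le_p : c < q → c ≤ p := hpq.le_of_lt
  have q_le : p < d → q ≤ d := hpq.ge_of_gt
  have hpq' := hpq.lt
  have inj : ∀ x y, w x = w y ↔ x = y := fun _ _ => w.injective.eq_iff
  simp only [Perm.mul_apply, swap_apply_def]
  grind

lemma eq_one_of_forall_not_descent {w : Perm (Fin N)} (h : ∀ p q, p ⋖ q → ¬w q < w p) :
    w = 1 := by
  have mono : StrictMono w := (strictMono_iff_forall_covBy w).mpr fun p q hpq =>
    (not_lt.mp (h p q hpq)).lt_of_ne (w.injective.ne hpq.lt.ne)
  exact DFunLike.coe_injective <| (mono.range_inj strictMono_id).mp <| by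
    rw [w.surjective.range_eq, Set.range_id]

lemma len_le_mul_self (w : Perm (Fin N)) : len w ≤ N * N :=
  (Finset.card_filter_le _ _).trans (by simp)

lemma apply_lt_of_forall_fixed {w : Perm (Fin N)} {k : ℕ}
    (hw : ∀ x : Fin N, k ≤ x → w x = x) {x : Fin N} (hx : (x : ℕ) < k) : (w x : ℕ) < k := by
  by_contra! h
  rw [w.injective (hw (w x) h)] at h
  omega

theorem descent_induction_of_fixed {k : ℕ} {C : Perm (Fin N) → Prop} (one : C 1)
    (descent : ∀ (w : Perm (Fin N)) (p q : Fin N), (∀ x : Fin N, k ≤ x → w x = x) → p ⋖ q →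
      (q : ℕ) < k → w q < w p → C (w * swap p q) → C w)
    (w : Perm (Fin N)) (hw : ∀ x : Fin N, k ≤ x → w x = x) : C w := by
  induction hn : len w using Nat.strong_induction_on generalizing w with
  | _ n ih =>
  by_cases hdesc : ∃ p q, p ⋖ q ∧ w q < w p
  · obtain ⟨p, q, hpq, hlt⟩ := hdesc
    have hqk : (q : ℕ) < k := by
      by_contra! hq
      have hq' := hw q hq
      obtain hp | hp := lt_or_ge (p : ℕ) k
      · have := apply_lt_of_forall_fixed hw hp
        omega
      · exact hlt.asymm (by rw [hq', hw p hp]; exact hpq.lt)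
    have hpq' := hpq.lt
    have := len_mul_swap_of_gt w hpq hlt
    refine descent w p q hw hpq hqk hlt (ih _ (by omega) _ (fun x hx => ?_) rfl)
    rw [Perm.mul_apply, swap_apply_of_ne_of_ne (by omega) (by omega), hw x hx]
  · push Not at hdesc
    rwa [eq_one_of_forall_not_descent fun p q hpq => (hdesc p q hpq).not_gt]

theorem descent_induction {C : Perm (Fin N) → Prop} (one : C 1)
    (descent : ∀ (w : Perm (Fin N)) (p q : Fin N), p ⋖ q → w q < w p → C (w * swap p q) → C w)
    (w : Perm (Fin N)) : C w :=
  descent_induction_of_fixed (k := N) one (fun w p q _ hpq _ => descent w p q hpq) w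
    fun x hx => absurd x.isLt hx.not_gt

theorem ascent_induction {C : Perm (Fin N) → Prop} (longest : C (w0 N))
    (ascent : ∀ w : Perm (Fin N), (∃ p q, p ⋖ q ∧ w p < w q) →
      (∀ p q, p ⋖ q → w p < w q → C (w * swap p q)) → C w)
    (w : Perm (Fin N)) : C w := by
  induction hn : N * N - len w using Nat.strong_induction_on generalizing w with
  | _ n ih =>
  by_cases hasc : ∃ p q, p ⋖ q ∧ w p < w q
  · refine ascent w hasc fun p q hpq hlt => ?_
    have := len_mul_swap_of_lt w hpq hlt
    have := len_le_mul_self (w * swap p q)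
    exact ih _ (by omega) _ rfl
  · push Not at hasc
    have hw : w0 N * w = 1 := eq_one_of_forall_not_descent fun p q hpq =>
      (Fin.rev_le_rev.mpr (hasc p q hpq)).not_gt
    rwa [eq_inv_of_mul_eq_one_right hw]

end Length

/-! ### The operators `∂_w` -/

section PermDivDiff

variable {N : ℕ} [NeZero N]

lemma pos_eq_mk {j : ℕ} (hj : 1 ≤ j) (hjN : j ≤ N) : pos N j = ⟨j - 1, by omega⟩ :=
  Fin.ext (Nat.mod_eq_of_lt (by omega))

lemma pos_val_add_one (p : Fin N) : pos N (p + 1) = p :=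
  pos_eq_mk (by omega) p.isLt

lemma pos_covBy_pos_succ {i : ℕ} (hi : 1 ≤ i) (hiN : i < N) : pos N i ⋖ pos N (i + 1) := by
  rw [Fin.covBy_iff, pos_eq_mk hi hiN.le, pos_eq_mk (by omega) hiN, Nat.covBy_iff_add_one_eq]
  dsimp only
  omega

lemma val_lt_val_iff (w : Perm (Fin N)) (i j : ℕ) :
    val w i < val w j ↔ w (pos N i) < w (pos N j) := by
  rw [val, val, Nat.add_lt_add_iff_right, Fin.lt_def]

lemma redWordAux_succ (w : Perm (Fin N)) :
    (w = 1 ∧ ∀ fuel, redWordAux N fuel w = []) ∨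
      ∃ i, 1 ≤ i ∧ i < N ∧ w (pos N (i + 1)) < w (pos N i) ∧
        ∀ fuel, redWordAux N (fuel + 1) w = redWordAux N fuel (w * t N i (i + 1)) ++ [i] := by
  cases hfind : ((List.range (N - 1)).map (· + 1)).find?
    (fun i => decide (val w (i + 1) < val w i)) with
  | none =>
    refine .inl ⟨eq_one_of_forall_not_descent fun p q hpq hlt => ?_, fun fuel => ?_⟩
    · have hpq' : (p : ℕ) + 1 = q := Nat.covBy_iff_add_one_eq.mp (Fin.covBy_iff.mp hpq)
      have no_descent := List.find?_eq_none.mp hfind (p + 1)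
        (List.mem_map.mpr ⟨p, List.mem_range.mpr (by omega), rfl⟩)
      rw [decide_eq_true_eq, val_lt_val_iff, pos_val_add_one, hpq', pos_val_add_one] at no_descent
      exact no_descent hlt
    · cases fuel with
      | zero => rfl
      | succ fuel => rw [redWordAux, hfind]
  | some i =>
    have hdesc := List.find?_some hfind
    obtain ⟨j, hj, rfl⟩ := List.mem_map.mp (List.mem_of_find?_eq_some hfind)
    rw [decide_eq_true_eq, val_lt_val_iff] at hdesc
    have := List.mem_range.mp hj
    exact .inr ⟨j + 1, by omega, by omega, hdesc, fun fuel => by rw [redWordAux, hfind]⟩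

lemma redWordAux_eq_of_len_le (w : Perm (Fin N)) {fuel fuel' : ℕ} (h : len w ≤ fuel)
    (h' : len w ≤ fuel') : redWordAux N fuel w = redWordAux N fuel' w := by
  induction fuel generalizing w fuel' with
  | zero =>
    obtain ⟨-, hnil⟩ | ⟨i, hi, hiN, hdesc, -⟩ := redWordAux_succ w
    · rw [hnil, hnil]
    · have := len_mul_swap_of_gt w (pos_covBy_pos_succ hi hiN) hdesc
      omega
  | succ fuel ih =>
    obtain ⟨-, hnil⟩ | ⟨i, hi, hiN, hdesc, hcons⟩ := redWordAux_succ w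
    · rw [hnil, hnil]
    · have hlen : len (w * t N i (i + 1)) + 1 = len w :=
        len_mul_swap_of_gt w (pos_covBy_pos_succ hi hiN) hdesc
      obtain ⟨fuel', rfl⟩ : ∃ m, fuel' = m + 1 := ⟨fuel' - 1, by omega⟩
      rw [hcons, hcons, ih (w * t N i (i + 1)) (fuel' := fuel') (by omega) (by omega)]

lemma redWord_eq (w : Perm (Fin N)) :
    (w = 1 ∧ redWord N w = []) ∨
      ∃ i, 1 ≤ i ∧ i < N ∧ w (pos N (i + 1)) < w (pos N i) ∧
        redWord N w = redWord N (w * t N i (i + 1)) ++ [i] := by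
  refine (redWordAux_succ w).imp (fun h => ⟨h.1, h.2 _⟩) fun ⟨i, hi, hiN, hdesc, hcons⟩ =>
    ⟨i, hi, hiN, hdesc, ?_⟩
  have : len (w * t N i (i + 1)) + 1 = len w :=
    len_mul_swap_of_gt w (pos_covBy_pos_succ hi hiN) hdesc
  have := len_le_mul_self w
  rw [redWord, redWordAux_eq_of_len_le w (fuel' := N * N + 1) (by omega) (by omega), hcons, redWord]

/-- The operator `∂_w`, as a linear map. -/
noncomputable def permDivDiff (w : Perm (Fin N)) :
    MvPolynomial (Fin N) ℤ →ₗ[ℤ] MvPolynomial (Fin N) ℤ :=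
  ((redWord N w).map fun i => divDiffAt (pos N i) (pos N (i + 1))).prod

lemma divDiff_eq_divDiffAt {i : ℕ} (hi : 1 ≤ i) (hiN : i < N) (f : MvPolynomial (Fin N) ℤ) :
    divDiff i f = divDiffAt (pos N i) (pos N (i + 1)) f := by
  have hdvd : (X (pos N i) - X (pos N (i + 1))) ∣ f - rename (t N i (i + 1)) f :=
    X_sub_X_dvd_sub_rename_swap _ _ _
  rw [divDiff, dif_pos hdvd]
  exact (divDiffAt_eq_of_mul_eq (pos_covBy_pos_succ hi hiN).lt.ne hdvd.choose_spec.symm).symm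

lemma permDivDiff_step (w : Perm (Fin N)) :
    (w = 1 ∧ permDivDiff w = 1) ∨
      ∃ p q, p ⋖ q ∧ w q < w p ∧ permDivDiff w = permDivDiff (w * swap p q) * divDiffAt p q := by
  refine (redWord_eq w).imp (fun h => ⟨h.1, by rw [permDivDiff, h.2]; rfl⟩)
    fun ⟨i, hi, hiN, hdesc, hcons⟩ => ⟨_, _, pos_covBy_pos_succ hi hiN, hdesc, ?_⟩
  rw [permDivDiff, hcons, List.map_append, List.prod_append, List.map_singleton,
    List.prod_singleton]
  rfl

lemma divDiffWord_redWord (w : Perm (Fin N)) (f : MvPolynomial (Fin N) ℤ) :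
    divDiffWord (redWord N w) f = permDivDiff w f := by
  induction hn : len w using Nat.strong_induction_on generalizing w f with
  | _ n ih =>
  obtain ⟨-, hnil⟩ | ⟨i, hi, hiN, hdesc, hcons⟩ := redWord_eq w
  · rw [permDivDiff, hnil]
    rfl
  · have hlen : len (w * t N i (i + 1)) + 1 = len w :=
      len_mul_swap_of_gt w (pos_covBy_pos_succ hi hiN) hdesc
    rw [permDivDiff, hcons, List.map_append, List.prod_append, List.map_singleton,
      List.prod_singleton, Module.End.mul_apply, ← divDiff_eq_divDiffAt hi hiN, ← permDivDiff,
      ← ih _ (by omega) _ _ rfl, divDiffWord, divDiffWord, List.foldr_append]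
    rfl

lemma permDivDiff_one : permDivDiff (1 : Perm (Fin N)) = 1 := by
  obtain h | ⟨p, q, hpq, hlt, -⟩ := permDivDiff_step (1 : Perm (Fin N))
  exacts [h.2, absurd hpq.lt hlt.asymm]

lemma permDivDiff_mul_divDiffAt_braid {w : Perm (Fin N)}
    (ih : ∀ v : Perm (Fin N), len v < len w → ∀ p q, p ⋖ q → v q < v p →
      permDivDiff v = permDivDiff (v * swap p q) * divDiffAt p q)
    {p q r : Fin N} (hpq : p ⋖ q) (hqr : q ⋖ r) (h₁ : w q < w p) (h₂ : w r < w q) :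
    permDivDiff (w * swap p q) * divDiffAt p q = permDivDiff (w * swap q r) * divDiffAt q r := by
  have npq := hpq.lt.ne
  have nqr := hqr.lt.ne
  have npr := (hpq.lt.trans hqr.lt).ne
  have lenp := len_mul_swap_of_gt w hpq h₁
  have lenq := len_mul_swap_of_gt w hqr h₂
  have dp : (w * swap p q) r < (w * swap p q) q := by
    simpa [swap_apply_of_ne_of_ne npr.symm nqr.symm] using h₂.trans h₁
  have dq : (w * swap q r) q < (w * swap q r) p := by
    simpa [swap_apply_of_ne_of_ne npq npr] using h₂.trans h₁
  have lenpq := len_mul_swap_of_gt _ hqr dp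
  have lenqp := len_mul_swap_of_gt _ hpq dq
  have dpq : (w * swap p q * swap q r) q < (w * swap p q * swap q r) p := by
    simpa [swap_apply_of_ne_of_ne npq npr, swap_apply_of_ne_of_ne npr.symm nqr.symm] using h₂
  have dqp : (w * swap q r * swap p q) r < (w * swap q r * swap p q) q := by
    simpa [swap_apply_of_ne_of_ne npq npr, swap_apply_of_ne_of_ne npr.symm nqr.symm] using h₁
  have perm_braid :
      w * swap p q * swap q r * swap p q = w * swap q r * swap p q * swap q r := by
    rw [mul_assoc, mul_assoc, ← mul_assoc (swap p q), swap_mul_swap_mul_swap_braid npq nqr npr]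
    simp only [mul_assoc]
  have op_braid : (divDiffAt p q * divDiffAt q r * divDiffAt p q :
      Module.End ℤ (MvPolynomial (Fin N) ℤ)) = divDiffAt q r * divDiffAt p q * divDiffAt q r :=
    LinearMap.ext (divDiffAt_braid npq nqr npr)
  rw [ih _ (by omega) q r hqr dp, ih _ (by omega) p q hpq dpq, ih _ (by omega) p q hpq dq,
    ih _ (by omega) q r hqr dqp, perm_braid]
  simp only [mul_assoc] at op_braid ⊢
  rw [op_braid]

lemma permDivDiff_mul_divDiffAt_comm {w : Perm (Fin N)}
    (ih : ∀ v : Perm (Fin N), len v < len w → ∀ p q, p ⋖ q → v q < v p →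
      permDivDiff v = permDivDiff (v * swap p q) * divDiffAt p q)
    {p q r s : Fin N} (hpq : p ⋖ q) (hrs : r ⋖ s) (h₁ : w q < w p) (h₂ : w s < w r)
    (hpr : p ≠ r) (hps : p ≠ s) (hqr : q ≠ r) (hqs : q ≠ s) :
    permDivDiff (w * swap p q) * divDiffAt p q = permDivDiff (w * swap r s) * divDiffAt r s := by
  have lenp := len_mul_swap_of_gt w hpq h₁
  have lenr := len_mul_swap_of_gt w hrs h₂
  have dp : (w * swap p q) s < (w * swap p q) r := by
    simpa [swap_apply_of_ne_of_ne, hpr.symm, hps.symm, hqr.symm, hqs.symm] using h₂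
  have dr : (w * swap r s) q < (w * swap r s) p := by
    simpa [swap_apply_of_ne_of_ne, hpr, hps, hqr, hqs] using h₁
  have op_comm : (divDiffAt r s * divDiffAt p q : Module.End ℤ (MvPolynomial (Fin N) ℤ)) =
      divDiffAt p q * divDiffAt r s :=
    LinearMap.ext (divDiffAt_comm hpr.symm hqr.symm hps.symm hqs.symm)
  rw [ih _ (by omega) r s hrs dp, ih _ (by omega) p q hpq dr, mul_assoc, mul_assoc w,
    swap_mul_swap_comm hpr hps hqr hqs, op_comm, mul_assoc, mul_assoc]

theorem permDivDiff_of_descent (w : Perm (Fin N)) {p q : Fin N} (hpq : p ⋖ q)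
    (hw : w q < w p) : permDivDiff w = permDivDiff (w * swap p q) * divDiffAt p q := by
  induction hn : len w using Nat.strong_induction_on generalizing w p q with
  | _ n ih =>
  subst hn
  replace ih : ∀ v : Perm (Fin N), len v < len w → ∀ p q, p ⋖ q → v q < v p →
      permDivDiff v = permDivDiff (v * swap p q) * divDiffAt p q :=
    fun v hv p q hpq hlt => ih _ hv v hpq hlt rfl
  obtain ⟨rfl, -⟩ | ⟨r, s, hrs, hw', step⟩ := permDivDiff_step w
  · exact absurd hpq.lt hw.asymm
  rw [step]
  obtain rfl | hpr := eq_or_ne p r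
  · rw [hpq.unique_right hrs]
  obtain rfl | hqr := eq_or_ne q r
  · exact (permDivDiff_mul_divDiffAt_braid ih hpq hrs hw hw').symm
  obtain rfl | hps := eq_or_ne p s
  · exact permDivDiff_mul_divDiffAt_braid ih hrs hpq hw' hw
  · have hqs : q ≠ s := fun h => hpr (hpq.unique_left (h ▸ hrs))
    exact (permDivDiff_mul_divDiffAt_comm ih hpq hrs hw hw' hpr hps hqr hqs).symm

lemma permDivDiff_apply_of_descent (w : Perm (Fin N)) {p q : Fin N} (hpq : p ⋖ q)
    (hw : w q < w p) (f : MvPolynomial (Fin N) ℤ) :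
    permDivDiff w f = permDivDiff (w * swap p q) (divDiffAt p q f) := by
  rw [permDivDiff_of_descent w hpq hw, Module.End.mul_apply]

lemma permDivDiff_divDiffAt_of_descent (w : Perm (Fin N)) {p q : Fin N} (hpq : p ⋖ q)
    (hw : w q < w p) (f : MvPolynomial (Fin N) ℤ) : permDivDiff w (divDiffAt p q f) = 0 := by
  rw [permDivDiff_apply_of_descent w hpq hw, divDiffAt_divDiffAt_self, map_zero]

lemma permDivDiff_swap_mul (w : Perm (Fin N)) {p q : Fin N} (hpq : p ⋖ q)
    (hw : w⁻¹ p < w⁻¹ q) (f : MvPolynomial (Fin N) ℤ) :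
    permDivDiff (swap p q * w) f = divDiffAt p q (permDivDiff w f) := by
  induction w using descent_induction generalizing f with
  | one =>
    rw [mul_one, permDivDiff_one,
      permDivDiff_apply_of_descent (swap p q) hpq (by simpa using hpq.lt), swap_mul_self,
      permDivDiff_one]
    rfl
  | descent w c d hcd hdesc ih =>
    have descent_left : (swap p q * w) d < (swap p q * w) c := by
      refine swap_lt_swap hpq hdesc fun h => hcd.lt.asymm ?_
      simpa [← h.1, ← h.2] using hw
    have ascent_right : (w * swap c d)⁻¹ p < (w * swap c d)⁻¹ q := by
      rw [mul_inv_rev, swap_inv]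
      refine swap_lt_swap hcd hw fun h => hpq.lt.asymm ?_
      simpa [← h.1, ← h.2] using hdesc
    rw [permDivDiff_apply_of_descent _ hcd descent_left, mul_assoc, ih ascent_right,
      ← permDivDiff_apply_of_descent w hcd hdesc]

end PermDivDiff

/-! ### Schubert polynomials -/

section Schubert

variable {N : ℕ} [NeZero N]

lemma schubertPoly_eq_permDivDiff (w : Perm (Fin N)) :
    schubertPoly N w = permDivDiff (w⁻¹ * w0 N) (staircase N) :=
  divDiffWord_redWord _ _

lemma schubertPoly_of_ascent (w : Perm (Fin N)) {p q : Fin N} (hpq : p ⋖ q) (hw : w p < w q) :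
    schubertPoly N w = divDiffAt p q (schubertPoly N (w * swap p q)) := by
  rw [schubertPoly_eq_permDivDiff, schubertPoly_eq_permDivDiff, ← permDivDiff_swap_mul _ hpq,
    mul_inv_rev, swap_inv, ← mul_assoc, ← mul_assoc, swap_mul_self, one_mul]
  simp only [mul_inv_rev, inv_inv, Perm.mul_apply, swap_apply_left, swap_apply_right]
  exact Fin.rev_lt_rev.mpr hw

lemma divDiffAt_schubertPoly_of_descent (w : Perm (Fin N)) {p q : Fin N} (hpq : p ⋖ q)
    (hw : w q < w p) : divDiffAt p q (schubertPoly N w) = schubertPoly N (w * swap p q) := by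
  rw [schubertPoly_of_ascent (w * swap p q) hpq (by simpa using hw), mul_swap_mul_self]

lemma divDiffAt_schubertPoly_of_ascent (w : Perm (Fin N)) {p q : Fin N} (hpq : p ⋖ q)
    (hw : w p < w q) : divDiffAt p q (schubertPoly N w) = 0 := by
  rw [schubertPoly_of_ascent w hpq hw, divDiffAt_divDiffAt_self]

lemma schubertPoly_w0 : schubertPoly N (w0 N) = staircase N := by
  rw [schubertPoly_eq_permDivDiff, inv_mul_cancel, permDivDiff_one, Module.End.one_apply]

end Schubert

section Dominant

variable {N : ℕ}

lemma lehmerCode_eq_apply {w : Perm (Fin N)} {p : Fin N} (h : ∀ x < p, w p < w x) :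
    lehmerCode w p = w p := by
  rw [← Fin.card_Iio, ← Finset.card_map w⁻¹.toEmbedding, lehmerCode]
  congr 1
  ext x
  rw [Finset.mem_filter, Finset.mem_map_equiv, Finset.mem_Iio, and_iff_right (Finset.mem_univ x)]
  refine ⟨fun hx => hx.2, fun hx => ⟨?_, hx⟩⟩
  obtain hlt | rfl | hgt := lt_trichotomy p x
  · exact hlt
  · exact absurd hx (lt_irrefl _)
  · exact absurd hx (h x hgt).asymm

lemma lehmerCode_eq_zero {w : Perm (Fin N)} {p : Fin N} (h : ∀ x, p < x → w p < w x) :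
    lehmerCode w p = 0 := by
  rw [lehmerCode, Finset.card_eq_zero, Finset.filter_eq_empty_iff]
  exact fun x _ hx => (h x hx.1).asymm hx.2

lemma lehmerCode_w0 (p : Fin N) : lehmerCode (w0 N) p = N - 1 - p := by
  rw [lehmerCode_eq_apply fun x hx => Fin.rev_lt_rev.mpr hx]
  change (p.rev : ℕ) = _
  rw [Fin.val_rev]
  omega

lemma lehmerCode_le_of_ascent {w : Perm (Fin N)} {p q : Fin N} (hpq : p ⋖ q) (hw : w p < w q) :
    lehmerCode w p ≤ lehmerCode w q := by
  refine Finset.card_le_card fun r hr => ?_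
  rw [Finset.mem_filter] at hr ⊢
  refine ⟨hr.1, (hpq.ge_of_gt hr.2.1).lt_of_ne ?_, hr.2.2.trans hw⟩
  rintro rfl
  exact hr.2.2.asymm hw

lemma lehmerCode_lt_of_descent {w : Perm (Fin N)} {p q : Fin N} (hpq : p ⋖ q) (hw : w q < w p) :
    lehmerCode w q < lehmerCode w p := by
  have hw' : (w * swap p q) p < (w * swap p q) q := by simpa using hw
  have code := lehmerCode_mul_swap _ hpq hw'
  have := lehmerCode_le_of_ascent hpq hw'
  rw [mul_swap_mul_self] at code
  rw [code, code, swap_apply_left, swap_apply_right, if_pos rfl, if_neg hpq.lt.ne']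
  omega

/-- Multiplying a dominant permutation by its first ascent `s_p` adds one to the `p`-th entry of
its code, and `∂_p (x_p · f) = f` for `f` symmetric in the two variables involved. -/
theorem schubertPoly_of_antitone_lehmerCode [NeZero N] (w : Perm (Fin N))
    (hw : Antitone (lehmerCode w)) : schubertPoly N w = ∏ p, X p ^ lehmerCode w p := by
  induction w using ascent_induction with
  | longest => simp only [schubertPoly_w0, staircase, lehmerCode_w0]
  | ascent w hex ih =>
    obtain ⟨p, ⟨q, hpq, hlt⟩, first⟩ := (Set.toFinite {p | ∃ q, p ⋖ q ∧ w p < w q}).exists_minimal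
      hex
    have code_eq : lehmerCode w p = lehmerCode w q :=
      (lehmerCode_le_of_ascent hpq hlt).antisymm (hw hpq.lt.le)
    have code_swap (r : Fin N) :
        lehmerCode (w * swap p q) r = lehmerCode w r + if r = p then 1 else 0 := by
      rw [lehmerCode_mul_swap w hpq hlt, swap_apply_def]
      grind
    have code_antitone : Antitone (lehmerCode (w * swap p q)) := by
      refine (antitone_iff_forall_covBy _).mpr fun a b hab => ?_
      rw [code_swap, code_swap]
      obtain rfl | hb := eq_or_ne b p
      · have := hab.lt
        have descent : w b < w a := (w.injective.ne hab.lt.ne').lt_of_le <| not_lt.mp fun h =>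
          (first ⟨b, hab, h⟩ hab.lt.le).not_gt hab.lt
        have := lehmerCode_lt_of_descent hab descent
        rw [if_pos rfl]
        omega
      · rw [if_neg hb, add_zero]
        exact (hw hab.lt.le).trans (Nat.le_add_right _ _)
    have monomial_swap : (∏ r, X r ^ lehmerCode (w * swap p q) r : MvPolynomial (Fin N) ℤ) =
        (∏ r, X r ^ lehmerCode w r) * X p := by
      simp only [code_swap, pow_add, Finset.prod_mul_distrib, pow_ite, pow_one, pow_zero,
        Finset.prod_ite_eq', Finset.mem_univ, if_true]
    have monomial_symm : rename (swap p q) (∏ r, X r ^ lehmerCode w r) =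
        (∏ r, X r ^ lehmerCode w r : MvPolynomial (Fin N) ℤ) := by
      simp only [map_prod, map_pow, rename_X]
      refine Fintype.prod_equiv (swap p q) _ _ fun r => ?_
      rw [swap_apply_def]
      grind
    rw [schubertPoly_of_ascent w hpq hlt, ih p q hpq hlt code_antitone, monomial_swap,
      divDiffAt_mul_of_rename_eq monomial_symm, divDiffAt_X_left hpq.lt.ne, mul_one]

lemma lehmerCode_one (p : Fin N) : lehmerCode 1 p = 0 :=
  lehmerCode_eq_zero fun _ hx => hx

lemma schubertPoly_one [NeZero N] : schubertPoly N 1 = 1 := by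
  rw [schubertPoly_of_antitone_lehmerCode 1 fun _ _ _ => by rw [lehmerCode_one, lehmerCode_one]]
  simp [lehmerCode_one]

end Dominant

section ConstantTerm

variable {σ R : Type*} [CommRing R]

lemma rename_mem_idealOfVars_pow {τ : Type*} (e : σ → τ) (d : ℕ) {f : MvPolynomial σ R}
    (hf : f ∈ idealOfVars σ R ^ d) : rename e f ∈ idealOfVars τ R ^ d := by
  have map_le : (idealOfVars σ R).map (rename (R := R) e) ≤ idealOfVars τ R := by
    rw [Ideal.map_span, Ideal.span_le]
    rintro _ ⟨_, ⟨i, rfl⟩, rfl⟩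
    rw [rename_X]
    exact Ideal.subset_span ⟨_, rfl⟩
  have mem := Ideal.mem_map_of_mem (rename (R := R) e) hf
  rw [Ideal.map_pow] at mem
  exact Ideal.pow_right_mono map_le d mem

lemma divDiffAt_mem_idealOfVars_pow [DecidableEq σ] [IsDomain R] (p q : σ) (d : ℕ)
    {f : MvPolynomial σ R} (hf : f ∈ idealOfVars σ R ^ (d + 1)) :
    divDiffAt p q f ∈ idealOfVars σ R ^ d := by
  induction d generalizing f with
  | zero => simp
  | succ d ih =>
    rw [pow_succ] at hf
    induction hf using Submodule.mul_induction_on' with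
    | mem_mul_mem g hg h hh =>
      rw [divDiffAt_mul]
      refine add_mem (Ideal.mul_mem_right _ _ (rename_mem_idealOfVars_pow _ _ hg)) ?_
      rw [pow_succ]
      exact Ideal.mul_mem_mul (ih hg) hh
    | add g _ h _ hg hh =>
      rw [map_add]
      exact add_mem hg hh

lemma schubertPoly_mem_idealOfVars_pow {N : ℕ} [NeZero N] (w : Perm (Fin N)) :
    schubertPoly N w ∈ idealOfVars (Fin N) ℤ ^ len w := by
  induction w using ascent_induction with
  | longest =>
    simp only [schubertPoly_w0, ← sum_lehmerCode, lehmerCode_w0, staircase,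
      ← Finset.prod_pow_eq_pow_sum]
    exact Ideal.prod_mem_prod fun i _ =>
      Ideal.pow_mem_pow (Ideal.subset_span (Set.mem_range_self i)) _
  | ascent w hex ih =>
    obtain ⟨p, q, hpq, hlt⟩ := hex
    rw [schubertPoly_of_ascent w hpq hlt]
    apply divDiffAt_mem_idealOfVars_pow
    rw [← len_mul_swap_of_lt w hpq hlt]
    exact ih p q hpq hlt

lemma constantCoeff_schubertPoly {N : ℕ} [NeZero N] (w : Perm (Fin N)) :
    constantCoeff (schubertPoly N w) = if 1 = w then 1 else 0 := by
  split_ifs with h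
  · rw [← h, schubertPoly_one, map_one]
  · refine (mem_pow_idealOfVars_iff' _ _).mp (schubertPoly_mem_idealOfVars_pow w) 0 ?_
    rw [map_zero, Nat.pos_iff_ne_zero]
    refine fun hlen => h (eq_one_of_forall_not_descent fun p q hpq hlt => ?_).symm
    have := len_mul_swap_of_gt w hpq hlt
    omega

end ConstantTerm

/-! ### Duality -/

section Duality

variable {N : ℕ} [NeZero N]

/-- The functional `f ↦ (∂_u f)(0)`, which extracts the coefficient of the class of `𝔖_u` from the
class of `f` in `Hₙ`. -/
noncomputable def schubertCoeff (u : Perm (Fin N)) : MvPolynomial (Fin N) ℤ →ₗ[ℤ] ℤ :=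
  lcoeff ℤ 0 ∘ₗ permDivDiff u

lemma schubertCoeff_apply (u : Perm (Fin N)) (f : MvPolynomial (Fin N) ℤ) :
    schubertCoeff u f = constantCoeff (permDivDiff u f) :=
  rfl

lemma schubertCoeff_schubertPoly (u w : Perm (Fin N)) :
    schubertCoeff u (schubertPoly N w) = if u = w then 1 else 0 := by
  induction u using descent_induction generalizing w with
  | one =>
    rw [schubertCoeff_apply, permDivDiff_one, Module.End.one_apply, constantCoeff_schubertPoly]
  | descent u p q hpq hu ih =>
    rw [schubertCoeff_apply, permDivDiff_apply_of_descent u hpq hu]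
    obtain hw | hw := (w.injective.ne hpq.lt.ne).lt_or_gt
    · rw [divDiffAt_schubertPoly_of_ascent w hpq hw, map_zero, map_zero, if_neg]
      rintro rfl
      exact hw.asymm hu
    · rw [divDiffAt_schubertPoly_of_descent w hpq hw, ← schubertCoeff_apply, ih]
      simp only [mul_left_inj]

lemma permDivDiff_mul_of_rename_eq {k : ℕ} {f : MvPolynomial (Fin N) ℤ}
    (hf : ∀ p q : Fin N, p ⋖ q → (q : ℕ) < k → rename (swap p q) f = f) (u : Perm (Fin N))
    (hu : ∀ x : Fin N, k ≤ x → u x = x) (g : MvPolynomial (Fin N) ℤ) :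
    permDivDiff u (f * g) = f * permDivDiff u g := by
  refine descent_induction_of_fixed
    (C := fun u => ∀ g, permDivDiff u (f * g) = f * permDivDiff u g) ?one ?descent u hu g
  case one => exact fun g => by simp only [permDivDiff_one, Module.End.one_apply]
  case descent =>
    intro u p q _ hpq hqk hu ih g
    rw [permDivDiff_apply_of_descent u hpq hu, divDiffAt_mul_of_rename_eq (hf p q hpq hqk), ih,
      ← permDivDiff_apply_of_descent u hpq hu]

lemma permDivDiff_mul_of_isSymmetric {f : MvPolynomial (Fin N) ℤ} (hf : f.IsSymmetric)
    (u : Perm (Fin N)) (g : MvPolynomial (Fin N) ℤ) :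
    permDivDiff u (f * g) = f * permDivDiff u g :=
  permDivDiff_mul_of_rename_eq (k := N) (fun p q _ _ => hf (swap p q)) u
    (fun x hx => absurd x.isLt hx.not_gt) g

lemma schubertCoeff_eq_zero_of_mem_symIdeal (u : Perm (Fin N)) {f : MvPolynomial (Fin N) ℤ}
    (hf : f ∈ symIdeal N) : schubertCoeff u f = 0 := by
  suffices ∀ g, schubertCoeff u (g * f) = 0 by simpa using this 1
  rw [symIdeal] at hf
  induction hf using Submodule.span_induction with
  | mem f hf =>
    intro g
    rw [mul_comm, schubertCoeff_apply, permDivDiff_mul_of_isSymmetric hf.1, map_mul, hf.2,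
      zero_mul]
  | zero => simp
  | add f f' _ _ hf hf' => simp [mul_add, hf, hf']
  | smul h f _ hf => exact fun g => by rw [smul_eq_mul, ← mul_assoc, hf]

theorem coeff_eq_schubertCoeff {f : MvPolynomial (Fin N) ℤ} {c : Perm (Fin N) → ℤ}
    (h : Ideal.Quotient.mk (symIdeal N) f = ∑ v, c v • SS N v) (u : Perm (Fin N)) :
    c u = schubertCoeff u f := by
  have mem : f - ∑ v, c v • schubertPoly N v ∈ symIdeal N := by
    rw [← Ideal.Quotient.eq, h, map_sum]
    simp only [SS, map_zsmul]
  have coeff := schubertCoeff_eq_zero_of_mem_symIdeal u mem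
  simp only [map_sub, map_sum, map_smul, schubertCoeff_schubertPoly, smul_eq_mul, mul_ite, mul_one,
    mul_zero, Finset.sum_ite_eq, Finset.mem_univ, if_true] at coeff
  omega

end Duality

/-! ### Monk's rule -/

section Monk

lemma mul_swap_mul_swap_apply_apply {α : Type*} [DecidableEq α] (w : Perm α) (p q j c : α) :
    w * swap p q * swap (swap p q j) (swap p q c) = w * swap j c * swap p q := by
  rw [swap_apply_apply, swap_inv]
  simp only [mul_assoc, swap_mul_self_mul]

variable {N : ℕ} [NeZero N]

lemma schubertCoeff_of_descent (w : Perm (Fin N)) {p q : Fin N} (hpq : p ⋖ q) (hw : w q < w p)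
    (f : MvPolynomial (Fin N) ℤ) :
    schubertCoeff w f = schubertCoeff (w * swap p q) (divDiffAt p q f) := by
  rw [schubertCoeff_apply, schubertCoeff_apply, permDivDiff_apply_of_descent w hpq hw]

/-- The coefficient of `𝔖_w` in `x_j · 𝔖_{w t_{j,c}}`. -/
noncomputable def coverSign (w : Perm (Fin N)) (j c : Fin N) : ℤ :=
  if len (w * swap j c) + 1 = len w then (if j < c then 1 else -1) else 0

lemma coverSign_smul_schubertCoeff_of_descent {w : Perm (Fin N)} {p q j c : Fin N} (hpq : p ⋖ q)
    (hw : w q < w p) (h : ¬(j = p ∧ c = q)) (h' : ¬(j = q ∧ c = p))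
    (g : MvPolynomial (Fin N) ℤ) :
    coverSign w j c • schubertCoeff (w * swap j c) g =
      coverSign (w * swap p q) (swap p q j) (swap p q c) •
        schubertCoeff (w * swap p q * swap (swap p q j) (swap p q c)) (divDiffAt p q g) := by
  have hlen := len_mul_swap_of_gt w hpq hw
  rw [coverSign, coverSign, mul_swap_mul_swap_apply_apply]
  obtain rfl | hjc := eq_or_ne j c
  · rw [swap_self, ← Perm.one_def, mul_one, if_neg (by omega), if_neg (by omega), zero_smul,
      zero_smul]
  have order_iff : swap p q j < swap p q c ↔ j < c := by
    obtain hlt | hlt := hjc.lt_or_gt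
    · exact iff_of_true (swap_lt_swap hpq hlt h) hlt
    · exact iff_of_false (swap_lt_swap hpq hlt fun h => h' h.symm).asymm hlt.asymm
  obtain hu | hu := ((w * swap j c).injective.ne hpq.lt.ne).lt_or_gt
  · rw [schubertCoeff_apply (w * swap j c * swap p q),
      permDivDiff_divDiffAt_of_descent _ hpq (by simpa using hu), map_zero, smul_zero, if_neg,
      zero_smul]
    intro hcover
    obtain hlt | hlt := hjc.lt_or_gt
    · exact hu.asymm (descent_mul_swap_of_len_add_one hpq hw hlt h hcover)
    · rw [swap_comm] at hcover hu
      exact hu.asymm (descent_mul_swap_of_len_add_one hpq hw hlt (fun h => h' h.symm) hcover)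
  · have := len_mul_swap_of_gt _ hpq hu
    rw [← schubertCoeff_of_descent _ hpq hu]
    simp only [order_iff]
    congr 2
    exact propext (by omega)

lemma coverSign_smul_schubertCoeff {w : Perm (Fin N)} {p q : Fin N} (hpq : p ⋖ q)
    (hw : w q < w p) (j c : Fin N) (g : MvPolynomial (Fin N) ℤ) :
    coverSign w j c • schubertCoeff (w * swap j c) g =
      coverSign (w * swap p q) (swap p q j) (swap p q c) •
        schubertCoeff (w * swap p q * swap (swap p q j) (swap p q c)) (divDiffAt p q g) +
      if c = swap p q j then schubertCoeff (w * swap p q) (divDiffAt p q (X j) * g) else 0 := by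
  have hlen := len_mul_swap_of_gt w hpq hw
  by_cases h : j = p ∧ c = q
  · obtain ⟨rfl, rfl⟩ := h
    rw [coverSign, coverSign, mul_swap_mul_swap_apply_apply, if_pos hlen, if_pos hpq.lt,
      if_neg (by rw [mul_swap_mul_self]; omega), swap_apply_left, if_pos rfl,
      divDiffAt_X_left hpq.lt.ne, one_mul, one_smul, zero_smul, zero_add]
  by_cases h' : j = q ∧ c = p
  · obtain ⟨rfl, rfl⟩ := h'
    rw [swap_comm] at hlen ⊢
    rw [coverSign, coverSign, swap_comm c j, mul_swap_mul_swap_apply_apply, if_pos hlen,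
      if_neg hpq.lt.asymm, if_neg (by rw [mul_swap_mul_self]; omega), swap_apply_left, if_pos rfl,
      divDiffAt_X_right hpq.lt.ne, neg_one_mul, map_neg, neg_one_smul, zero_smul, zero_add]
  rw [coverSign_smul_schubertCoeff_of_descent hpq hw h h', left_eq_add, ite_eq_right_iff]
  rintro rfl
  have hp : j ≠ p := fun hj => h ⟨hj, by rw [hj, swap_apply_left]⟩
  have hq : j ≠ q := fun hj => h' ⟨hj, by rw [hj, swap_apply_right]⟩
  rw [divDiffAt_X_of_ne hp hq, zero_mul, map_zero]

theorem schubertCoeff_X_mul (w : Perm (Fin N)) (j : Fin N) (g : MvPolynomial (Fin N) ℤ) :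
    schubertCoeff w (X j * g) = ∑ c, coverSign w j c • schubertCoeff (w * swap j c) g := by
  induction w using descent_induction generalizing j g with
  | one =>
    have no_cover (c : Fin N) : coverSign 1 j c = 0 :=
      if_neg (by rw [← sum_lehmerCode 1]; simp [lehmerCode_one])
    simp [schubertCoeff_apply, permDivDiff_one, no_cover]
  | descent w p q hpq hw ih =>
    simp only [coverSign_smul_schubertCoeff hpq hw, Finset.sum_add_distrib,
      Finset.sum_ite_eq', Finset.mem_univ, if_true]
    rw [schubertCoeff_of_descent w hpq hw, divDiffAt_mul, map_add, rename_X, ih,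
      Equiv.sum_comp (swap p q) fun c => coverSign (w * swap p q) (swap p q j) c •
        schubertCoeff (w * swap p q * swap (swap p q j) c) (divDiffAt p q g)]

end Monk

/-! ### Chains of transpositions with distinct upper positions -/

section Chain

variable {N : ℕ}

/-- The product of the transpositions listed in `L`, in reverse order: consing a transposition
multiplies on the right. -/
def transpositionProd : List (Fin N × Fin N) → Perm (Fin N)
  | [] => 1
  | x :: L => transpositionProd L * swap x.1 x.2

/-- The condition on the pairs of positions in `w →_{r[k,m]} w'`, apart from the lengths. -/
def IsPieriList (k : ℕ) (L : List (Fin N × Fin N)) : Prop :=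
  (∀ x ∈ L, (x.1 : ℕ) < k ∧ k ≤ (x.2 : ℕ)) ∧ (L.map Prod.snd).Nodup

lemma isPieriList_cons {k : ℕ} {x : Fin N × Fin N} {L : List (Fin N × Fin N)} :
    IsPieriList k (x :: L) ↔
      ((x.1 : ℕ) < k ∧ k ≤ (x.2 : ℕ)) ∧ x.2 ∉ L.map Prod.snd ∧ IsPieriList k L := by
  simp only [IsPieriList, List.forall_mem_cons, List.map_cons, List.nodup_cons]
  tauto

lemma IsPieriList.sublist {k : ℕ} {L L' : List (Fin N × Fin N)} (hL : IsPieriList k L)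
    (h : L'.Sublist L) : IsPieriList k L' :=
  ⟨fun x hx => hL.1 x (h.subset hx), hL.2.sublist (h.map _)⟩

lemma transpositionProd_apply_eq_self_iff {k : ℕ} {L : List (Fin N × Fin N)}
    (hL : IsPieriList k L) {b : Fin N} (hb : k ≤ (b : ℕ)) :
    transpositionProd L b = b ↔ b ∉ L.map Prod.snd := by
  induction L with
  | nil => simp [transpositionProd]
  | cons x L ih =>
    obtain ⟨⟨hx, -⟩, hxL, hL⟩ := isPieriList_cons.mp hL
    rw [transpositionProd, Perm.mul_apply, List.map_cons, List.mem_cons, not_or]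
    obtain rfl | hbx := eq_or_ne b x.2
    · rw [swap_apply_right]
      refine iff_of_false (fun h => ?_) (fun h => h.1 rfl)
      have := (transpositionProd L).injective (h.trans ((ih hL).mpr hxL).symm)
      omega
    · rw [swap_apply_of_ne_of_ne (by rintro rfl; omega) hbx, ih hL, and_iff_right hbx]

lemma transpositionProd_mul_swap {k : ℕ} {L : List (Fin N × Fin N)} (hL : IsPieriList k L)
    {j c : Fin N} (hj : (j : ℕ) < k) (hc : k ≤ (c : ℕ)) (h : transpositionProd L j = c) :
    (j, c) ∈ L ∧ transpositionProd L * swap j c = transpositionProd (L.erase (j, c)) := by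
  induction L with
  | nil => exact absurd (congrArg Fin.val h) (by dsimp [transpositionProd]; omega)
  | cons x L ih =>
    obtain ⟨⟨hx, hx'⟩, hxL, hL⟩ := isPieriList_cons.mp hL
    rw [transpositionProd, Perm.mul_apply] at h
    obtain rfl | hxj := eq_or_ne j x.1
    · rw [swap_apply_left, (transpositionProd_apply_eq_self_iff hL hx').mpr hxL] at h
      subst h
      rw [Prod.mk.eta, List.erase_cons_head, transpositionProd, mul_swap_mul_self]
      exact ⟨List.mem_cons_self, rfl⟩
    · rw [swap_apply_of_ne_of_ne hxj (by rintro rfl; omega)] at h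
      obtain ⟨hmem, herase⟩ := ih hL h
      have hne : x.2 ≠ c := fun h => hxL (List.mem_map.mpr ⟨_, hmem, h.symm⟩)
      have hne' : x ≠ (j, c) := fun h => hxj (congrArg Prod.fst h).symm
      rw [List.erase_cons_tail (by simpa using hne'), transpositionProd, transpositionProd,
        ← herase, mul_assoc, mul_assoc,
        swap_mul_swap_comm hxj.symm (by rintro rfl; omega) (by rintro rfl; omega) hne]
      exact ⟨List.mem_cons_of_mem _ hmem, rfl⟩

/-- The positions `≥ k` (0-indexed) moved by `v`. -/
noncomputable def movedAbove (k : ℕ) (v : Perm (Fin N)) : Finset (Fin N) :=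
  Finset.univ.filter fun b => k ≤ (b : ℕ) ∧ v b ≠ b

lemma mem_movedAbove {k : ℕ} {v : Perm (Fin N)} {b : Fin N} :
    b ∈ movedAbove k v ↔ k ≤ (b : ℕ) ∧ v b ≠ b := by
  rw [movedAbove, Finset.mem_filter, and_iff_right (Finset.mem_univ b)]

lemma movedAbove_subset_insert {k : ℕ} (v : Perm (Fin N)) {j : Fin N} (hj : (j : ℕ) < k)
    (c : Fin N) : movedAbove k v ⊆ insert c (movedAbove k (v * swap j c)) := by
  intro b hb
  rw [mem_movedAbove] at hb
  rw [Finset.mem_insert, mem_movedAbove]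
  refine or_iff_not_imp_left.mpr fun hbc => ⟨hb.1, ?_⟩
  rw [Perm.mul_apply, swap_apply_of_ne_of_ne (by rintro rfl; omega) hbc]
  exact hb.2

lemma card_movedAbove_transpositionProd {k : ℕ} {L : List (Fin N × Fin N)}
    (hL : IsPieriList k L) : (movedAbove k (transpositionProd L)).card = L.length := by
  have moved_eq : movedAbove k (transpositionProd L) = (L.map Prod.snd).toFinset := by
    ext b
    rw [mem_movedAbove, List.mem_toFinset]
    refine ⟨fun h => ?_, fun h => ?_⟩
    · rw [Ne, transpositionProd_apply_eq_self_iff hL h.1, not_not] at h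
      exact h.2
    · obtain ⟨x, hx, rfl⟩ := List.mem_map.mp h
      have hk := (hL.1 x hx).2
      rw [Ne, transpositionProd_apply_eq_self_iff hL hk, not_not]
      exact ⟨hk, h⟩
  rw [moved_eq, List.toFinset_card_of_nodup hL.2, List.length_map]

end Chain

section ChainCoefficient

variable {N : ℕ} [NeZero N] {k : ℕ} {w v : Perm (Fin N)}

/-- The coefficient of `𝔖_{wv}` in `x_J 𝔖_w`, where `x_J` is the product of the variables listed
in `J`. -/
noncomputable def chainCoeff (w v : Perm (Fin N)) (J : List (Fin N)) : ℤ :=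
  schubertCoeff (w * v) ((J.map X).prod * schubertPoly N w)

lemma chainCoeff_nil (w v : Perm (Fin N)) : chainCoeff w v [] = if v = 1 then 1 else 0 := by
  simp only [chainCoeff, List.map_nil, List.prod_nil, one_mul, schubertCoeff_schubertPoly,
    mul_eq_left]

lemma eq_one_of_chainCoeff_nil_ne_zero (h : chainCoeff w v [] ≠ 0) : v = 1 := by
  rw [chainCoeff_nil] at h
  exact (ite_ne_right_iff.mp h).1

lemma chainCoeff_cons (w v : Perm (Fin N)) (j : Fin N) (J : List (Fin N)) :
    chainCoeff w v (j :: J) = ∑ c, coverSign (w * v) j c * chainCoeff w (v * swap j c) J := by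
  simp only [chainCoeff, List.map_cons, List.prod_cons, mul_assoc, schubertCoeff_X_mul,
    smul_eq_mul]

lemma exists_chainCoeff_ne_zero {j : Fin N} {J : List (Fin N)}
    (h : chainCoeff w v (j :: J) ≠ 0) :
    ∃ c, len (w * (v * swap j c)) + 1 = len (w * v) ∧ chainCoeff w (v * swap j c) J ≠ 0 := by
  rw [chainCoeff_cons] at h
  obtain ⟨c, -, hc⟩ := Finset.exists_ne_zero_of_sum_ne_zero h
  rw [mul_ne_zero_iff, coverSign, ite_ne_right_iff, mul_assoc] at hc
  exact ⟨c, hc.1.1, hc.2⟩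

lemma len_eq_of_chainCoeff_ne_zero {J : List (Fin N)} (h : chainCoeff w v J ≠ 0) :
    len (w * v) = len w + J.length := by
  induction J generalizing v with
  | nil => rw [eq_one_of_chainCoeff_nil_ne_zero h, mul_one, List.length_nil, add_zero]
  | cons j J ih =>
    obtain ⟨c, hlen, hc⟩ := exists_chainCoeff_ne_zero h
    have := ih hc
    rw [List.length_cons]
    omega

lemma card_movedAbove_le_of_chainCoeff_ne_zero {J : List (Fin N)} (hJ : ∀ j ∈ J, (j : ℕ) < k)
    (h : chainCoeff w v J ≠ 0) : (movedAbove k v).card ≤ J.length := by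
  induction J generalizing v with
  | nil => simp [eq_one_of_chainCoeff_nil_ne_zero h, movedAbove]
  | cons j J ih =>
    rw [List.forall_mem_cons] at hJ
    obtain ⟨c, -, hc⟩ := exists_chainCoeff_ne_zero h
    exact (Finset.card_le_card (movedAbove_subset_insert v hJ.1 c)).trans
      ((Finset.card_insert_le _ _).trans (Nat.succ_le_succ (ih hJ.2 hc)))

/-- Each factor `x_j` of `x_J` lets only one position `≥ k` become moved. If `v` moves as many of
these positions as possible, then the last factor must put one of them back in place. -/
lemma apply_eq_of_chainCoeff_mul_swap_ne_zero {J : List (Fin N)} (hJ : ∀ j ∈ J, (j : ℕ) < k)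
    (hv : (movedAbove k v).card = J.length + 1) {j c : Fin N} (hj : (j : ℕ) < k)
    (h : chainCoeff w (v * swap j c) J ≠ 0) : v j = c ∧ k ≤ (c : ℕ) := by
  have card_le := card_movedAbove_le_of_chainCoeff_ne_zero hJ h
  have subset := movedAbove_subset_insert v hj c
  have hc : c ∉ movedAbove k (v * swap j c) := fun hc => by
    rw [Finset.insert_eq_of_mem hc] at subset
    have := Finset.card_le_card subset
    omega
  have hc' : c ∈ movedAbove k v := by
    by_contra hc'
    have := Finset.card_le_card ((Finset.subset_insert_iff_of_notMem hc').mp subset)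
    omega
  rw [mem_movedAbove] at hc hc'
  rw [Perm.mul_apply, swap_apply_right] at hc
  exact ⟨by_contra fun hne => hc ⟨hc'.1, hne⟩, hc'.1⟩

lemma perm_of_chainCoeff_ne_zero {J : List (Fin N)} (hJ : ∀ j ∈ J, (j : ℕ) < k)
    {L : List (Fin N × Fin N)} (hL : IsPieriList k L) (hlen : L.length = J.length)
    (h : chainCoeff w (transpositionProd L) J ≠ 0) : J.Perm (L.map Prod.fst) := by
  induction J generalizing L with
  | nil => rw [List.eq_nil_of_length_eq_zero hlen, List.map_nil]
  | cons j J ih =>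
    rw [List.forall_mem_cons] at hJ
    obtain ⟨c, -, hc⟩ := exists_chainCoeff_ne_zero h
    obtain ⟨hjc, hkc⟩ := apply_eq_of_chainCoeff_mul_swap_ne_zero hJ.2
      ((card_movedAbove_transpositionProd hL).trans hlen) hJ.1 hc
    obtain ⟨hmem, herase⟩ := transpositionProd_mul_swap hL hJ.1 hkc hjc
    rw [herase] at hc
    have tail : J.Perm ((L.erase (j, c)).map Prod.fst) :=
      ih hJ.2 (hL.sublist List.erase_sublist) (by
        rw [List.length_erase_of_mem hmem, hlen, List.length_cons, Nat.add_sub_cancel]) hc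
    exact (tail.cons j).trans ((List.perm_cons_erase hmem).map Prod.fst).symm

lemma chainCoeff_map_fst {L : List (Fin N × Fin N)} (hL : IsPieriList k L)
    (hlen : ∀ L', L' <:+ L → len (w * transpositionProd L') = len w + L'.length) :
    chainCoeff w (transpositionProd L) (L.map Prod.fst) = 1 := by
  induction L with
  | nil => rw [List.map_nil, chainCoeff_nil, transpositionProd, if_pos rfl]
  | cons x L ih =>
    have card_moved := card_movedAbove_transpositionProd hL
    obtain ⟨⟨hx, hx'⟩, hxL, hL⟩ := isPieriList_cons.mp hL
    have hJ : ∀ j ∈ L.map Prod.fst, (j : ℕ) < k := List.forall_mem_map.mpr fun y hy => (hL.1 y hy).1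
    have apply_fst : transpositionProd (x :: L) x.1 = x.2 := by
      rw [transpositionProd, Perm.mul_apply, swap_apply_left,
        (transpositionProd_apply_eq_self_iff hL hx').mpr hxL]
    have mul_swap : transpositionProd (x :: L) * swap x.1 x.2 = transpositionProd L :=
      mul_swap_mul_self ..
    have cover : coverSign (w * transpositionProd (x :: L)) x.1 x.2 = 1 := by
      rw [coverSign, mul_assoc, mul_swap, hlen _ (List.suffix_cons x L), hlen _ List.suffix_rfl,
        List.length_cons, if_pos (add_assoc ..), if_pos (Fin.lt_def.mpr (hx.trans_le hx'))]
    rw [List.map_cons, chainCoeff_cons, Finset.sum_eq_single x.2, cover, mul_swap, one_mul,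
      ih hL fun L' hL' => hlen L' (hL'.trans (List.suffix_cons x L))]
    · intro c _ hc
      by_contra h
      have := apply_eq_of_chainCoeff_mul_swap_ne_zero hJ (by simpa using card_moved) hx
        (right_ne_zero_of_mul h)
      exact hc (this.1.symm.trans apply_fst)
    · exact fun h => absurd (Finset.mem_univ _) h

lemma prod_map_X_toMultiset {σ R : Type*} [CommSemiring R] (d : σ →₀ ℕ) :
    ((Finsupp.toMultiset d).toList.map X).prod = (monomial d 1 : MvPolynomial σ R) := by
  rw [← Multiset.prod_coe, ← Multiset.map_coe, Multiset.coe_toList, Finsupp.toMultiset_map,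
    Finsupp.prod_toMultiset, Finsupp.prod_mapDomain_index (fun _ => pow_zero _)
      (fun _ _ _ => pow_add _ _ _), monomial_eq, C_1, one_mul]

lemma schubertCoeff_monomial_mul_schubertPoly {L : List (Fin N × Fin N)} (hL : IsPieriList k L)
    (hlen : ∀ L', L' <:+ L → len (w * transpositionProd L') = len w + L'.length)
    {d : Fin N →₀ ℕ} (hd : ∀ j ∈ d.support, (j : ℕ) < k) :
    schubertCoeff (w * transpositionProd L) (monomial d 1 * schubertPoly N w) =
      if Multiset.toFinsupp (L.map Prod.fst : Multiset (Fin N)) = d then 1 else 0 := by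
  split_ifs with h
  · refine Eq.trans ?_ (chainCoeff_map_fst hL hlen)
    rw [chainCoeff, ← h, ← prod_map_X_toMultiset, Multiset.toFinsupp_toMultiset]
    congr 2
    exact ((Multiset.coe_eq_coe.mp (Multiset.coe_toList _)).map X).prod_eq
  · rw [← prod_map_X_toMultiset]
    by_contra hne
    change chainCoeff w (transpositionProd L) _ ≠ 0 at hne
    have len_eq := len_eq_of_chainCoeff_ne_zero hne
    rw [hlen L List.suffix_rfl] at len_eq
    have perm := perm_of_chainCoeff_ne_zero (k := k) (fun j hj => hd j (by simpa using hj)) hL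
      (by omega) hne
    rw [← Multiset.coe_eq_coe, Multiset.coe_toList] at perm
    exact h (by rw [← perm, Finsupp.toMultiset_toFinsupp])

theorem schubertCoeff_mul_schubertPoly {L : List (Fin N × Fin N)} (hL : IsPieriList k L)
    (hlen : ∀ L', L' <:+ L → len (w * transpositionProd L') = len w + L'.length)
    {f : MvPolynomial (Fin N) ℤ} (hf : f ∈ supported ℤ {i : Fin N | (i : ℕ) < k}) :
    schubertCoeff (w * transpositionProd L) (f * schubertPoly N w) =
      coeff (Multiset.toFinsupp (L.map Prod.fst : Multiset (Fin N))) f := by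
  have monomial_eq_smul (d : Fin N →₀ ℕ) : monomial d (coeff d f) =
      coeff d f • (monomial d 1 : MvPolynomial (Fin N) ℤ) := by
    rw [smul_monomial, smul_eq_mul, mul_one]
  conv_lhs => rw [f.as_sum, Finset.sum_mul, map_sum]
  conv_rhs => rw [f.as_sum, coeff_sum]
  refine Finset.sum_congr rfl fun d hd => ?_
  have supp_lt : ∀ j ∈ d.support, (j : ℕ) < k := fun j hj =>
    mem_supported.mp hf (Finset.mem_coe.mpr ((mem_vars_iff_mem_support j).mpr ⟨d, hd, hj⟩))
  rw [monomial_eq_smul, smul_mul_assoc, map_smul,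
    schubertCoeff_monomial_mul_schubertPoly hL hlen supp_lt, coeff_smul, coeff_monomial]
  simp only [eq_comm]

end ChainCoefficient

/-! ### Complete homogeneous polynomials and the bialternant formula -/

section CompleteHomogeneous

variable {σ τ R : Type*} [DecidableEq σ] [DecidableEq τ] [CommRing R]

/-- The complete homogeneous symmetric polynomial of degree `d` in the variables of `s`, which
is `0` for `d < 0`. -/
noncomputable def completeHomogeneous (R : Type*) [CommRing R] (s : Finset σ) (d : ℤ) :
    MvPolynomial σ R :=
  if 0 ≤ d then ∑ u ∈ s.sym d.toNat, (Multiset.map X (u : Multiset σ)).prod else 0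

lemma completeHomogeneous_natCast (s : Finset σ) (m : ℕ) :
    completeHomogeneous R s m = ∑ u ∈ s.sym m, (Multiset.map X (u : Multiset σ)).prod :=
  if_pos (Int.natCast_nonneg m)

lemma completeHomogeneous_of_neg (s : Finset σ) {d : ℤ} (hd : d < 0) :
    completeHomogeneous R s d = 0 :=
  if_neg hd.not_ge

lemma completeHomogeneous_zero (s : Finset σ) : completeHomogeneous R s 0 = 1 := by
  rw [← Nat.cast_zero, completeHomogeneous_natCast, Finset.sym_zero, Finset.sum_singleton]
  exact Multiset.prod_zero

lemma completeHomogeneous_singleton (l : σ) (m : ℕ) :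
    completeHomogeneous R {l} m = X l ^ m := by
  rw [completeHomogeneous_natCast, Finset.sym_singleton, Finset.sum_singleton,
    Sym.coe_replicate, Multiset.map_replicate, Multiset.prod_replicate]

lemma rename_completeHomogeneous (f : σ ↪ τ) (s : Finset σ) (d : ℤ) :
    rename f (completeHomogeneous R s d) = completeHomogeneous R (s.map f) d := by
  rw [completeHomogeneous, completeHomogeneous, apply_ite (rename f), map_zero, map_sum]
  congr 1
  rw [Finset.sym_map, Finset.sum_map]
  refine Finset.sum_congr rfl fun u _ => ?_
  rw [map_multiset_prod, Multiset.map_map]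
  simp [rename_X, Sym.coe_map]

lemma sym_insert_succ (s : Finset σ) (a : σ) (m : ℕ) :
    (insert a s).sym (m + 1) = s.sym (m + 1) ∪ ((insert a s).sym m).image (Sym.cons a) := by
  ext u
  simp only [Finset.mem_union, Finset.mem_image, Finset.mem_sym_iff, Finset.mem_insert]
  refine ⟨fun h => ?_, ?_⟩
  · by_cases hau : a ∈ u
    · obtain ⟨t, rfl⟩ := Sym.exists_cons_of_mem hau
      exact .inr ⟨t, fun x hx => h x (Sym.mem_cons_of_mem hx), rfl⟩
    · exact .inl fun x hx => (h x hx).resolve_left fun hxa => hau (hxa ▸ hx)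
  · rintro (h | ⟨t, ht, rfl⟩) x hx
    · exact .inr (h x hx)
    · exact (Sym.mem_cons.mp hx).elim .inl (ht x)

lemma completeHomogeneous_insert {s : Finset σ} {a : σ} (ha : a ∉ s) (d : ℤ) :
    completeHomogeneous R (insert a s) d =
      completeHomogeneous R s d + X a * completeHomogeneous R (insert a s) (d - 1) := by
  obtain h | rfl | h := lt_trichotomy d 0
  · rw [completeHomogeneous_of_neg _ h, completeHomogeneous_of_neg _ h,
      completeHomogeneous_of_neg _ (by omega), mul_zero, add_zero]
  · rw [completeHomogeneous_zero, completeHomogeneous_zero,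
      completeHomogeneous_of_neg _ (by omega), mul_zero, add_zero]
  · obtain ⟨m, rfl⟩ : ∃ m : ℕ, d = ((m + 1 : ℕ) : ℤ) := ⟨d.toNat - 1, by omega⟩
    have disjoint : Disjoint (s.sym (m + 1)) (((insert a s).sym m).image (Sym.cons a)) := by
      refine Finset.disjoint_left.mpr fun u hu hu' => ?_
      obtain ⟨t, -, rfl⟩ := Finset.mem_image.mp hu'
      exact ha (Finset.mem_sym_iff.mp hu a (Sym.mem_cons_self a t))
    rw [Nat.cast_succ, add_sub_cancel_right, ← Nat.cast_succ, completeHomogeneous_natCast,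
      completeHomogeneous_natCast, completeHomogeneous_natCast, sym_insert_succ,
      Finset.sum_union disjoint,
      Finset.sum_image fun x _ y _ => (Sym.cons_inj_right a x y).mp, Finset.mul_sum]
    simp only [Sym.coe_cons, Multiset.map_cons, Multiset.prod_cons]

/-- The linear functional `T ^ j ↦ h_{e+j}`, where the `h_d` are the complete homogeneous
polynomials in the variables of `s`. -/
noncomputable def completePairing (R : Type*) [CommRing R] (s : Finset σ) (e : ℤ) :
    Polynomial (MvPolynomial σ R) →ₗ[MvPolynomial σ R] MvPolynomial σ R :=
  Polynomial.lsum fun j => LinearMap.toSpanSingleton _ _ (completeHomogeneous R s (e + j))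

lemma completePairing_apply (s : Finset σ) (e : ℤ) (p : Polynomial (MvPolynomial σ R)) :
    completePairing R s e p = p.sum fun j a => a * completeHomogeneous R s (e + j) := by
  simp [completePairing, Polynomial.lsum_apply]

lemma completePairing_monomial (s : Finset σ) (e : ℤ) (j : ℕ) (a : MvPolynomial σ R) :
    completePairing R s e (Polynomial.monomial j a) = a * completeHomogeneous R s (e + j) := by
  rw [completePairing_apply, Polynomial.sum_monomial_index a _ (by rw [zero_mul])]

lemma completePairing_one (s : Finset σ) (e : ℤ) :
    completePairing R s e 1 = completeHomogeneous R s e := by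
  rw [← Polynomial.monomial_zero_one, completePairing_monomial, one_mul, Nat.cast_zero, add_zero]

lemma completePairing_eq_sum (s : Finset σ) (e : ℤ) {p : Polynomial (MvPolynomial σ R)} {k : ℕ}
    (hp : p.natDegree < k) :
    completePairing R s e p =
      ∑ j : Fin k, completeHomogeneous R s (e + (j : ℕ)) * p.coeff j := by
  rw [completePairing_apply, Polynomial.sum_over_range' p (fun n => by rw [zero_mul]) k hp,
    Finset.sum_range]
  simp only [mul_comm]

lemma completePairing_insert_mul_X_sub_C {s : Finset σ} {a : σ} (ha : a ∉ s) (e : ℤ)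
    (p : Polynomial (MvPolynomial σ R)) :
    completePairing R (insert a s) e (p * (Polynomial.X - Polynomial.C (X a))) =
      completePairing R s (e + 1) p := by
  induction p using Polynomial.induction_on' with
  | add p q hp hq => rw [add_mul, map_add, map_add, hp, hq]
  | monomial j b =>
    have h := completeHomogeneous_insert (R := R) ha (e + 1 + j)
    rw [add_right_comm, add_sub_cancel_right, ← sub_eq_iff_eq_add] at h
    rw [mul_sub, Polynomial.monomial_mul_X, Polynomial.monomial_mul_C, map_sub,
      completePairing_monomial, completePairing_monomial, completePairing_monomial,
      add_right_comm e 1, ← h, Nat.cast_succ, add_assoc]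
    ring

lemma completePairing_mul_prod_X_sub_C {s t : Finset σ} (h : Disjoint t s) (e : ℤ)
    (p : Polynomial (MvPolynomial σ R)) :
    completePairing R (t ∪ s) e (p * ∏ i ∈ t, (Polynomial.X - Polynomial.C (X i))) =
      completePairing R s (e + t.card) p := by
  induction t using Finset.induction_on generalizing e p with
  | empty => simp
  | insert a t hat ih =>
    rw [Finset.disjoint_insert_left] at h
    rw [Finset.prod_insert hat, Finset.insert_union, mul_comm (Polynomial.X - _), ← mul_assoc,
      completePairing_insert_mul_X_sub_C (by simp [hat, h.1]), ih h.2,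
      Finset.card_insert_of_notMem hat, Nat.cast_succ, add_assoc, add_comm 1]

variable [Fintype σ]

/-- `∏_{i ≠ l} (T - x_i)`. -/
noncomputable def prodOthers (R : Type*) [CommRing R] (l : σ) : Polynomial (MvPolynomial σ R) :=
  ∏ i ∈ Finset.univ.erase l, (Polynomial.X - Polynomial.C (X i))

lemma completePairing_prodOthers (l : σ) {e : ℤ} {d : ℕ} (hd : e + Fintype.card σ = d + 1) :
    completePairing R Finset.univ e (prodOthers R l) = X l ^ d := by
  have hdisj : Disjoint (Finset.univ.erase l) {l} := by simp
  have h := completePairing_mul_prod_X_sub_C (R := R) hdisj e 1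
  rw [Finset.union_comm, ← Finset.insert_eq, Finset.insert_erase (Finset.mem_univ l), one_mul,
    completePairing_one] at h
  rw [prodOthers, h, ← completeHomogeneous_singleton]
  congr 1
  have := Finset.card_erase_add_one (Finset.mem_univ l)
  rw [Finset.card_univ] at this
  omega

lemma natDegree_prodOthers_lt [Nontrivial R] (l : σ) :
    (prodOthers R l).natDegree < Fintype.card σ := by
  rw [prodOthers, Polynomial.natDegree_finsetProd_X_sub_C_eq_card, ← Finset.card_univ]
  exact Finset.card_erase_lt_of_mem (Finset.mem_univ l)

end CompleteHomogeneous

section Bialternant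

lemma hPolyZ_eq_completeHomogeneous (N k : ℕ) (d : ℤ) :
    hPolyZ N k d =
      completeHomogeneous ℤ (Finset.univ.filter fun i : Fin N => (i : ℕ) < k) d := by
  unfold hPolyZ completeHomogeneous hPoly
  congr

variable {k : ℕ}

lemma hPolyZ_self (d : ℤ) : hPolyZ k k d = completeHomogeneous ℤ Finset.univ d := by
  rw [hPolyZ_eq_completeHomogeneous, Finset.filter_true_of_mem fun i _ => i.isLt]

lemma rename_castLE_hPolyZ {N : ℕ} (hk : k ≤ N) (d : ℤ) :
    rename (Fin.castLE hk) (hPolyZ k k d) = hPolyZ N k d := by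
  have map_univ : Finset.univ.map (Fin.castLEEmb hk) =
      Finset.univ.filter fun i : Fin N => (i : ℕ) < k := by
    ext i
    rw [Finset.mem_map, Finset.mem_filter, and_iff_right (Finset.mem_univ i)]
    exact ⟨fun ⟨x, _, hx⟩ => hx ▸ x.isLt, fun h => ⟨⟨i, h⟩, Finset.mem_univ _, rfl⟩⟩
  rw [hPolyZ_self, hPolyZ_eq_completeHomogeneous, ← map_univ]
  exact rename_completeHomogeneous (Fin.castLEEmb hk) _ d

lemma rename_castLE_schurPoly {N : ℕ} (hk : k ≤ N) (lam : ℕ → ℕ) :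
    rename (Fin.castLE hk) (schurPoly k k lam) = schurPoly N k lam := by
  rw [schurPoly, AlgHom.map_det, schurPoly]
  congr 1
  ext1 i j
  exact rename_castLE_hPolyZ hk _

lemma schurPoly_isSymmetric (lam : ℕ → ℕ) : (schurPoly k k lam).IsSymmetric := by
  intro e
  rw [schurPoly, AlgHom.map_det]
  congr 1
  ext1 i j
  have h := rename_completeHomogeneous (R := ℤ) e.toEmbedding Finset.univ
    ((lam ((i : ℕ) + 1) : ℤ) + (j : ℕ) - (i : ℕ))
  rw [Finset.map_univ_equiv] at h
  simpa [hPolyZ_self] using h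

lemma schurPoly_zero : schurPoly k k 0 = 1 := by
  have upper : (Matrix.of fun i j : Fin k => hPolyZ k k
      (((0 : ℕ → ℕ) ((i : ℕ) + 1) : ℤ) + (j : ℕ) - (i : ℕ))).IsUpperTriangular := by
    intro i j hij
    have : (j : ℕ) < i := hij
    rw [Matrix.of_apply, hPolyZ_self, Pi.zero_apply, Nat.cast_zero,
      completeHomogeneous_of_neg _ (by omega)]
  rw [schurPoly, Matrix.det_of_isUpperTriangular upper]
  refine Finset.prod_eq_one fun i _ => ?_
  rw [Matrix.of_apply, hPolyZ_self, Pi.zero_apply, Nat.cast_zero, zero_add, sub_self,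
    completeHomogeneous_zero]

/-- The alternant `det (x_l ^ β_i)`. -/
noncomputable def alternant (β : Fin k → ℕ) : MvPolynomial (Fin k) ℤ :=
  (Matrix.of fun i l => X l ^ β i).det

/-- The exponents `λ + δ`, where `δ = (k-1, …, 1, 0)`. -/
def addStaircase (k : ℕ) (lam : ℕ → ℕ) (i : Fin k) : ℕ := lam (i + 1) + (k - 1 - i)

lemma schurPoly_mul_det_coeff_prodOthers (lam : ℕ → ℕ) :
    schurPoly k k lam * (Matrix.of fun j l : Fin k => (prodOthers ℤ l).coeff (j : ℕ)).det =
      alternant (addStaircase k lam) := by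
  rw [schurPoly, ← Matrix.det_mul, alternant]
  congr 1
  ext1 i l
  rw [Matrix.mul_apply, Matrix.of_apply, ← completePairing_prodOthers l
    (e := (lam ((i : ℕ) + 1) : ℤ) - (i : ℕ)) (by rw [Fintype.card_fin, addStaircase]; omega),
    completePairing_eq_sum (k := k) _ _ (by simpa using natDegree_prodOthers_lt (R := ℤ) l)]
  simp only [Matrix.of_apply, hPolyZ_self, sub_add_eq_add_sub]

theorem schurPoly_mul_alternant (lam : ℕ → ℕ) :
    schurPoly k k lam * alternant (addStaircase k 0) = alternant (addStaircase k lam) := by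
  rw [← schurPoly_mul_det_coeff_prodOthers 0, schurPoly_zero, one_mul,
    schurPoly_mul_det_coeff_prodOthers]

end Bialternant

/-! ### Littlewood–Richardson coefficients of skew rows -/

section LittlewoodRichardson

variable {k : ℕ}

lemma monomial_equivFunOnFinite_symm {σ R : Type*} [Fintype σ] [CommSemiring R] (β : σ → ℕ) :
    (monomial (Finsupp.equivFunOnFinite.symm β) 1 : MvPolynomial σ R) = ∏ i, X i ^ β i := by
  rw [monomial_eq, C_1, one_mul, Finsupp.prod_fintype _ _ fun i => pow_zero _]
  rfl

lemma alternant_eq_sum (β : Fin k → ℕ) :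
    alternant β = ∑ σ : Perm (Fin k), (Perm.sign σ : ℤ) •
      monomial (Finsupp.equivFunOnFinite.symm (β ∘ σ)) 1 := by
  simp only [alternant, Matrix.det_apply, monomial_equivFunOnFinite_symm, Matrix.of_apply,
    Function.comp_apply, Units.smul_def]

lemma perm_eq_one_of_forall_le_apply {σ : Perm (Fin k)} (h : ∀ i, i ≤ σ i) : σ = 1 := by
  have sum_eq : ∑ i : Fin k, (i : ℕ) = ∑ i, (σ i : ℕ) :=
    (Equiv.sum_comp σ fun i : Fin k => (i : ℕ)).symm
  rw [Finset.sum_eq_sum_iff_of_le fun i _ => Fin.le_def.mp (h i)] at sum_eq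
  exact Equiv.ext fun i => Fin.ext (sum_eq i (Finset.mem_univ i)).symm

lemma perm_eq_one_of_comp_eq {β γ : Fin k → ℕ} (hβ : StrictAnti β) (hγ : StrictAnti γ)
    {σ : Perm (Fin k)} (h : β ∘ σ = γ) : σ = 1 := by
  have mono : StrictMono σ := fun x y hxy => by
    rw [← hβ.lt_iff_gt]
    subst h
    exact hγ hxy
  exact perm_eq_one_of_forall_le_apply fun i => mono.le_apply

lemma coeff_alternant {β γ : Fin k → ℕ} (hβ : StrictAnti β) (hγ : StrictAnti γ) :
    coeff (Finsupp.equivFunOnFinite.symm γ) (alternant β) = if β = γ then 1 else 0 := by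
  rw [alternant_eq_sum, coeff_sum, Finset.sum_eq_single 1]
  · rw [coeff_smul, coeff_monomial, Perm.coe_one, Function.comp_id, Perm.sign_one, Units.val_one,
      one_smul]
    simp only [EmbeddingLike.apply_eq_iff_eq]
  · intro σ _ hσ
    rw [coeff_smul, coeff_monomial, if_neg, smul_zero]
    exact fun h => hσ (perm_eq_one_of_comp_eq hβ hγ (Equiv.injective _ h))
  · exact fun h => absurd (Finset.mem_univ 1) h

/-- Only the diagonal monomial `x^β` of the alternant contributes: the interlacing of `β` and `γ`
keeps the exponents of all others from being dominated by `γ`. -/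
lemma coeff_alternant_mul {β γ : Fin k → ℕ} (hγ : Antitone γ) (hle : β ≤ γ)
    (interlacing : ∀ i j, i ⋖ j → γ j < β i) (f : MvPolynomial (Fin k) ℤ) :
    coeff (Finsupp.equivFunOnFinite.symm γ) (alternant β * f) =
      coeff (Finsupp.equivFunOnFinite.symm (γ - β)) f := by
  rw [alternant_eq_sum, Finset.sum_mul, coeff_sum, Finset.sum_eq_single 1]
  · rw [Perm.sign_one, Units.val_one, one_smul, Perm.coe_one, Function.comp_id,
      coeff_monomial_mul', if_pos (by exact fun i => hle i), one_mul]
    exact congrArg (coeff · f) (Finsupp.ext fun _ => rfl)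
  · intro σ _ hσ
    rw [smul_mul_assoc, coeff_smul, coeff_monomial_mul', if_neg, smul_zero]
    refine fun h => hσ (perm_eq_one_of_forall_le_apply fun i => not_lt.mp fun hlt => ?_)
    obtain ⟨j, hj, hji⟩ := exists_covBy_le_of_lt hlt
    exact ((hγ hji).trans_lt (interlacing _ _ hj)).not_ge (h i)
  · exact fun h => absurd (Finset.mem_univ 1) h

lemma IsPartFun.antitoneOn {lam : ℕ → ℕ} (hlam : IsPartFun k lam) : AntitoneOn lam (Set.Ici 1) := by
  intro x hx y _ hxy
  induction y, hxy using Nat.le_induction with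
  | base => exact le_rfl
  | succ y hy ih => exact (hlam.2.1 y (hx.trans hy)).trans (ih (hx.trans hy))

lemma isPartFun_zero : IsPartFun k 0 := ⟨rfl, fun _ _ => le_rfl, fun _ _ => rfl⟩

lemma strictAnti_addStaircase {lam : ℕ → ℕ} (hlam : IsPartFun k lam) :
    StrictAnti (addStaircase k lam) := by
  intro x y hxy
  have := hlam.antitoneOn (Nat.le_add_left 1 x) (Nat.le_add_left 1 y)
    (Nat.add_le_add_right hxy.le 1)
  rw [Fin.lt_def] at hxy
  rw [addStaircase, addStaircase]
  omega

lemma addStaircase_eq_iff {lam rho : ℕ → ℕ} (hlam : IsPartFun k lam) (hrho : IsPartFun k rho) :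
    addStaircase k lam = addStaircase k rho ↔ lam = rho := by
  refine ⟨fun h => funext fun j => ?_, fun h => h ▸ rfl⟩
  obtain rfl | hj := Nat.eq_zero_or_pos j
  · rw [hlam.1, hrho.1]
  obtain hjk | hjk := lt_or_ge k j
  · rw [hlam.2.2 j hjk, hrho.2.2 j hjk]
  · have := congrFun h ⟨j - 1, by omega⟩
    simp only [addStaircase, Nat.sub_add_cancel hj] at this
    omega

lemma coeff_alternant_addStaircase {lam rho : ℕ → ℕ} (hlam : IsPartFun k lam)
    (hrho : IsPartFun k rho) :
    coeff (Finsupp.equivFunOnFinite.symm (addStaircase k rho)) (alternant (addStaircase k lam)) =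
      if lam = rho then 1 else 0 := by
  rw [coeff_alternant (strictAnti_addStaircase hlam) (strictAnti_addStaircase hrho)]
  simp only [addStaircase_eq_iff hlam hrho]

lemma coeff_alternant_addStaircase_mul {lam mu : ℕ → ℕ} (hlam : IsPartFun k lam)
    (hle : ∀ j, 1 ≤ j → mu j ≤ lam j) (hrow : ∀ j, 1 ≤ j → j < k → lam (j + 1) ≤ mu j)
    (f : MvPolynomial (Fin k) ℤ) :
    coeff (Finsupp.equivFunOnFinite.symm (addStaircase k lam))
        (alternant (addStaircase k mu) * f) =
      coeff (Finsupp.equivFunOnFinite.symm fun i : Fin k => lam (i + 1) - mu (i + 1)) f := by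
  have sub_eq : addStaircase k lam - addStaircase k mu =
      fun i : Fin k => lam (i + 1) - mu (i + 1) :=
    funext fun i => Nat.add_sub_add_right _ _ _
  have le : addStaircase k mu ≤ addStaircase k lam :=
    fun i => Nat.add_le_add_right (hle _ (Nat.le_add_left 1 i)) _
  rw [← sub_eq, coeff_alternant_mul (strictAnti_addStaircase hlam).antitone le]
  intro i j hij
  have val_eq : (i : ℕ) + 1 = j := Nat.covBy_iff_add_one_eq.mp (Fin.covBy_iff.mp hij)
  have := hrow (i + 1) (by omega) (by omega)
  rw [addStaircase, addStaircase, ← val_eq]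
  omega

lemma coeff_eq_coeff_of_schurPoly_mul_eq {lam mu : ℕ → ℕ} (hlam : IsPartFun k lam)
    (hle : ∀ j, 1 ≤ j → mu j ≤ lam j) (hrow : ∀ j, 1 ≤ j → j < k → lam (j + 1) ≤ mu j)
    {f : MvPolynomial (Fin k) ℤ} {c : (ℕ → ℕ) → ℤ} (hfin : c.support.Finite)
    (hc : ∀ rho, c rho ≠ 0 → IsPartFun k rho)
    (h : schurPoly k k mu * f = ∑ᶠ rho, c rho • schurPoly k k rho) :
    c lam = coeff (Finsupp.equivFunOnFinite.symm fun i : Fin k => lam (i + 1) - mu (i + 1)) f := by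
  have alternant_mul : alternant (addStaircase k mu) * f =
      ∑ rho ∈ hfin.toFinset, c rho • alternant (addStaircase k rho) := by
    rw [finsum_eq_sum_of_support_subset _ (s := hfin.toFinset) (by
      rw [hfin.coe_toFinset]; exact Function.support_smul_subset_left _ _)] at h
    rw [← schurPoly_mul_alternant, mul_right_comm, h, Finset.sum_mul]
    simp only [smul_mul_assoc, schurPoly_mul_alternant]
  have coeff_smul_alternant : ∀ rho ∈ hfin.toFinset,
      coeff (Finsupp.equivFunOnFinite.symm (addStaircase k lam))
        (c rho • alternant (addStaircase k rho)) = if rho = lam then c rho else 0 := by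
    intro rho hrho
    rw [coeff_smul, coeff_alternant_addStaircase (hc rho (hfin.mem_toFinset.mp hrho)) hlam,
      smul_eq_mul, mul_ite, mul_one, mul_zero]
  rw [← coeff_alternant_addStaircase_mul hlam hle hrow, alternant_mul, coeff_sum,
    Finset.sum_congr rfl coeff_smul_alternant, Finset.sum_ite_eq']
  split_ifs with hmem
  · rfl
  · rwa [hfin.mem_toFinset, Function.notMem_support] at hmem

theorem littlewoodRichardson_eq_coeff_schurPoly {N : ℕ} (hk : k ≤ N) {lam mu nu : ℕ → ℕ}
    (hlam : IsPartFun k lam) (hle : ∀ j, 1 ≤ j → mu j ≤ lam j)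
    (hrow : ∀ j, 1 ≤ j → j < k → lam (j + 1) ≤ mu j)
    {c : (ℕ → ℕ) → ℤ} (hfin : c.support.Finite) (hc : ∀ rho, c rho ≠ 0 → IsPartFun k rho)
    (h : schurPoly N k mu * schurPoly N k nu = ∑ᶠ rho, c rho • schurPoly N k rho) :
    c lam = coeff (Finsupp.equivFunOnFinite.symm fun i : Fin k => lam (i + 1) - mu (i + 1))
      (schurPoly k k nu) := by
  refine coeff_eq_coeff_of_schurPoly_mul_eq hlam hle hrow hfin hc ?_
  refine rename_injective _ (Fin.castLE_injective hk) ?_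
  have finite_support : (Function.support fun rho => c rho • schurPoly k k rho).Finite :=
    hfin.subset (Function.support_smul_subset_left _ _)
  rw [map_mul, map_finsum _ finite_support]
  simpa only [map_zsmul, rename_castLE_schurPoly] using h

end LittlewoodRichardson

/-! ### Grassmannian Schubert polynomials -/

section Grassmannian

variable {N k : ℕ}

/-- The permutation reversing the first `k` positions; `∂` of it is the total symmetrization in
`x₁, …, x_k`. -/
def revFirst (hk : k ≤ N) : Perm (Fin N) :=
  Fin.revPerm.viaFintypeEmbedding (Fin.castLEEmb hk)

lemma revFirst_castLE (hk : k ≤ N) (i : Fin k) :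
    revFirst hk (Fin.castLE hk i) = Fin.castLE hk i.rev :=
  Perm.viaFintypeEmbedding_apply_image _ (Fin.castLEEmb hk) i

lemma revFirst_of_le (hk : k ≤ N) {x : Fin N} (hx : k ≤ (x : ℕ)) : revFirst hk x = x := by
  refine Perm.viaFintypeEmbedding_apply_notMem_range _ _ ?_
  rintro ⟨i, rfl⟩
  exact hx.not_gt i.isLt

lemma strictAntiOn_mul_revFirst (hk : k ≤ N) {w : Perm (Fin N)}
    (hw : StrictMonoOn w {x | (x : ℕ) < k}) :
    StrictAntiOn (w * revFirst hk) {x | (x : ℕ) < k} := by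
  intro x hx y hy hxy
  obtain ⟨i, rfl⟩ : ∃ i : Fin k, Fin.castLE hk i = x := ⟨⟨x, hx⟩, rfl⟩
  obtain ⟨j, rfl⟩ : ∃ j : Fin k, Fin.castLE hk j = y := ⟨⟨y, hy⟩, rfl⟩
  rw [Perm.mul_apply, Perm.mul_apply, revFirst_castLE, revFirst_castLE]
  exact hw j.rev.isLt i.rev.isLt (Fin.rev_lt_rev.mpr hxy)

lemma permDivDiff_schubertPoly_mul [NeZero N] {w u : Perm (Fin N)}
    (hw : StrictMonoOn w {x | (x : ℕ) < k}) (hu : ∀ x : Fin N, k ≤ x → u x = x) :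
    permDivDiff u (schubertPoly N (w * u)) = schubertPoly N w := by
  refine descent_induction_of_fixed
    (C := fun u => permDivDiff u (schubertPoly N (w * u)) = schubertPoly N w) ?one ?descent u hu
  case one =>
    rw [permDivDiff_one, mul_one, Module.End.one_apply]
  case descent =>
    intro u p q hu hpq hqk hdesc ih
    have hpk : (p : ℕ) < k := (Fin.lt_def.mp hpq.lt).trans hqk
    have descent_mul : (w * u) q < (w * u) p :=
      hw (apply_lt_of_forall_fixed hu hqk) (apply_lt_of_forall_fixed hu hpk) hdesc
    rw [permDivDiff_apply_of_descent u hpq hdesc,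
      divDiffAt_schubertPoly_of_descent (w * u) hpq descent_mul, mul_assoc, ih]

lemma rename_castLE_rename_swap (hk : k ≤ N) (p q : Fin k) (f : MvPolynomial (Fin k) ℤ) :
    rename (Fin.castLE hk) (rename (swap p q) f) =
      rename (swap (Fin.castLE hk p) (Fin.castLE hk q)) (rename (Fin.castLE hk) f) := by
  rw [rename_rename, rename_rename]
  congr 2
  funext i
  exact (Fin.castLE_injective hk).map_swap p q i

lemma rename_swap_schurPoly (hk : k ≤ N) (lam : ℕ → ℕ) {p q : Fin N} (hp : (p : ℕ) < k)
    (hq : (q : ℕ) < k) : rename (swap p q) (schurPoly N k lam) = schurPoly N k lam := by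
  have swap_castLE := rename_castLE_rename_swap hk ⟨p, hp⟩ ⟨q, hq⟩ (schurPoly k k lam)
  rw [schurPoly_isSymmetric, rename_castLE_schurPoly] at swap_castLE
  exact swap_castLE.symm

lemma schurPoly_mem_supported (hk : k ≤ N) (lam : ℕ → ℕ) :
    schurPoly N k lam ∈ supported ℤ {i : Fin N | (i : ℕ) < k} := by
  rw [← rename_castLE_schurPoly hk, mem_supported]
  intro p hp
  obtain ⟨i, -, rfl⟩ := Finset.mem_image.mp (vars_rename _ _ hp)
  exact i.isLt

lemma permDivDiff_revFirst_rename [NeZero N] (hk : k ≤ N) (σ : Perm (Fin k))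
    (f : MvPolynomial (Fin k) ℤ) :
    permDivDiff (revFirst hk) (rename (Fin.castLE hk) (rename σ f)) =
      (Perm.sign σ : ℤ) • permDivDiff (revFirst hk) (rename (Fin.castLE hk) f) := by
  induction σ using descent_induction generalizing f with
  | one => rw [Perm.coe_one, rename_id_apply, Perm.sign_one, Units.val_one, one_smul]
  | descent σ p q hpq _ ih =>
    have covBy : Fin.castLE hk p ⋖ Fin.castLE hk q := by
      rw [Fin.covBy_iff] at hpq ⊢
      exact hpq
    have descent : revFirst hk (Fin.castLE hk q) < revFirst hk (Fin.castLE hk p) := by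
      rw [revFirst_castLE, revFirst_castLE]
      exact Fin.rev_lt_rev.mpr hpq.lt
    have antisymm : permDivDiff (revFirst hk) (rename (Fin.castLE hk) (rename (swap p q) f)) =
        -permDivDiff (revFirst hk) (rename (Fin.castLE hk) f) := by
      rw [rename_castLE_rename_swap, permDivDiff_apply_of_descent _ covBy descent,
        divDiffAt_rename, map_neg, ← permDivDiff_apply_of_descent _ covBy descent]
    rw [← mul_swap_mul_self p q σ, ← rename_rename_perm, ih, antisymm, mul_swap_mul_self,
      Perm.sign_mul, Perm.sign_swap hpq.lt.ne]
    simp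

lemma permDivDiff_revFirst_alternant [NeZero N] (hk : k ≤ N) (β : Fin k → ℕ) :
    permDivDiff (revFirst hk) (rename (Fin.castLE hk) (alternant β)) =
      (k.factorial : ℤ) •
        permDivDiff (revFirst hk) (rename (Fin.castLE hk) (∏ i, X i ^ β i)) := by
  have alternant_eq : alternant β =
      ∑ σ : Perm (Fin k), (Perm.sign σ : ℤ) • rename σ (∏ i, X i ^ β i) := by
    rw [alternant, ← Matrix.det_transpose, Matrix.det_apply]
    simp only [Matrix.transpose_apply, Matrix.of_apply, map_prod, map_pow, rename_X, Units.smul_def]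
  simp only [alternant_eq, map_sum, map_zsmul, permDivDiff_revFirst_rename, smul_smul,
    ← Units.val_mul, Int.units_mul_self, Units.val_one, one_smul, Finset.sum_const,
    Finset.card_univ, Fintype.card_perm, Fintype.card_fin, natCast_zsmul]

variable [NeZero N] {nu : ℕ → ℕ} {w : Perm (Fin N)}

lemma IsGrassOf.apply_castLE (hk : k ≤ N) (hw : IsGrassOf N k nu w) (i : Fin k) :
    (w (Fin.castLE hk i) : ℕ) = i + nu (k - i) := by
  have := hw.1 (i + 1) (by omega) i.isLt
  rw [val, ← Fin.val_castLE hk i, pos_val_add_one, Fin.val_castLE, Nat.add_sub_add_right] at this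
  omega

lemma IsGrassOf.strictMonoOn_lt (hw : IsGrassOf N k nu w) (hk : k ≤ N) (hnu : IsPartFun k nu) :
    StrictMonoOn w {x | (x : ℕ) < k} := by
  intro x hx y hy hxy
  have hx' := hw.apply_castLE hk ⟨x, hx⟩
  have hy' := hw.apply_castLE hk ⟨y, hy⟩
  have := hnu.antitoneOn (a := k - y) (b := k - x) (Nat.sub_pos_of_lt hy) (Nat.sub_pos_of_lt hx)
    (by omega)
  rw [Fin.lt_def] at hxy ⊢
  dsimp only [Fin.castLE_mk, Fin.eta] at hx' hy'
  omega

lemma IsGrassOf.strictMonoOn_ge (hw : IsGrassOf N k nu w) :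
    StrictMonoOn w {x | k ≤ (x : ℕ)} := by
  have strictMonoOn_val : StrictMonoOn (val w) (Set.Ioc k N) :=
    strictMonoOn_of_lt_add_one Set.ordConnected_Ioc fun j _ hj hj' => hw.2 j hj.1 hj'.2
  intro x hx y hy hxy
  rw [← pos_val_add_one x, ← pos_val_add_one y, ← val_lt_val_iff]
  exact strictMonoOn_val ⟨Nat.lt_succ_of_le hx, x.isLt⟩ ⟨Nat.lt_succ_of_le hy, y.isLt⟩
    (Nat.add_lt_add_right hxy 1)

lemma isGrassOf_one (hk : k ≤ N) : IsGrassOf N k 0 1 := by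
  have val_one : ∀ j, 1 ≤ j → j ≤ N → val (1 : Perm (Fin N)) j = j := fun j hj hjN => by
    rw [val, Perm.one_apply, pos_eq_mk hj hjN, Nat.sub_add_cancel hj]
  refine ⟨fun j hj hjk => val_one j hj (hjk.trans hk), fun j hj hjN => ?_⟩
  rw [val_one j (by omega) hjN.le, val_one (j + 1) (by omega) hjN]
  exact Nat.lt_succ_self j

lemma IsGrassOf.lehmerCode_mul_revFirst_castLE (hw : IsGrassOf N k nu w) (hk : k ≤ N)
    (hnu : IsPartFun k nu) (i : Fin k) :
    lehmerCode (w * revFirst hk) (Fin.castLE hk i) = addStaircase k nu i := by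
  have anti := strictAntiOn_mul_revFirst hk (hw.strictMonoOn_lt hk hnu)
  rw [lehmerCode_eq_apply fun x hx => anti ((Fin.lt_def.mp hx).trans i.isLt) i.isLt hx,
    Perm.mul_apply, revFirst_castLE, hw.apply_castLE, addStaircase, Fin.val_rev,
    show k - (k - (i + 1)) = i + 1 by omega]
  omega

lemma IsGrassOf.lehmerCode_mul_revFirst_of_le (hw : IsGrassOf N k nu w) (hk : k ≤ N) {p : Fin N}
    (hp : k ≤ (p : ℕ)) : lehmerCode (w * revFirst hk) p = 0 := by
  refine lehmerCode_eq_zero fun x hx => ?_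
  have hxk : k ≤ (x : ℕ) := hp.trans hx.le
  rw [Perm.mul_apply, Perm.mul_apply, revFirst_of_le hk hp, revFirst_of_le hk hxk]
  exact hw.strictMonoOn_ge hp hxk hx

lemma IsGrassOf.schubertPoly_mul_revFirst (hw : IsGrassOf N k nu w) (hk : k ≤ N)
    (hnu : IsPartFun k nu) :
    schubertPoly N (w * revFirst hk) =
      rename (Fin.castLE hk) (∏ i, X i ^ addStaircase k nu i) := by
  rw [schubertPoly_of_antitone_lehmerCode]
  · simp only [map_prod, map_pow, rename_X, ← hw.lehmerCode_mul_revFirst_castLE hk hnu]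
    refine (Fintype.prod_of_injective _ (Fin.castLE_injective hk) _ _ (fun p hp => ?_)
      fun _ => rfl).symm
    rw [hw.lehmerCode_mul_revFirst_of_le hk, pow_zero]
    exact not_lt.mp fun hpk => hp ⟨⟨p, hpk⟩, rfl⟩
  · intro p q hpq
    obtain hq | hq := lt_or_ge (q : ℕ) k
    · have := (strictAnti_addStaircase hnu).antitone (a := ⟨p, (Fin.le_def.mp hpq).trans_lt hq⟩)
        (b := ⟨q, hq⟩) hpq
      rwa [← hw.lehmerCode_mul_revFirst_castLE hk hnu,
        ← hw.lehmerCode_mul_revFirst_castLE hk hnu] at this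
    · rw [hw.lehmerCode_mul_revFirst_of_le hk hq]
      exact Nat.zero_le _

/-- Symmetrizing the bialternant formula turns both alternants into Schubert polynomials, those of
the Grassmannian permutations of shapes `ν` and `∅`. -/
theorem IsGrassOf.schubertPoly_eq_schurPoly (hw : IsGrassOf N k nu w) (hk : k ≤ N)
    (hnu : IsPartFun k nu) : schubertPoly N w = schurPoly N k nu := by
  have permDivDiff_alternant {rho : ℕ → ℕ} {v : Perm (Fin N)} (hv : IsGrassOf N k rho v)
      (hrho : IsPartFun k rho) :
      permDivDiff (revFirst hk) (rename (Fin.castLE hk) (alternant (addStaircase k rho))) =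
        (k.factorial : ℤ) • schubertPoly N v := by
    rw [permDivDiff_revFirst_alternant, ← hv.schubertPoly_mul_revFirst hk hrho,
      permDivDiff_schubertPoly_mul (hv.strictMonoOn_lt hk hrho) fun x => revFirst_of_le hk]
  have bialternant := congrArg (fun f => permDivDiff (revFirst hk) (rename (Fin.castLE hk) f))
    (schurPoly_mul_alternant nu (k := k))
  rw [map_mul, rename_castLE_schurPoly, permDivDiff_mul_of_rename_eq _ _
    fun x => revFirst_of_le hk, permDivDiff_alternant (isGrassOf_one hk) isPartFun_zero,
    permDivDiff_alternant hw hnu, schubertPoly_one, mul_smul_comm, mul_one] at bialternant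
  · exact (smul_right_injective _ (by positivity) bialternant).symm
  · exact fun p q hpq hqk =>
      rename_swap_schurPoly hk nu ((Fin.lt_def.mp hpq.lt).trans hqk) hqk

end Grassmannian

/-! ### The skew row and the list of transpositions of a chain -/

section Chain

variable {a b : ℕ → ℕ} {k m : ℕ}

lemma rJ_succ (a : ℕ → ℕ) (m j : ℕ) : rJ a (m + 1) j = rJ a m j + if a m = j then 1 else 0 := by
  simp only [rJ, Finset.card_filter, Finset.sum_range_succ]

lemma rJ_eq_zero {j : ℕ} (ha : ∀ i < m, a i ≤ k) (hj : k < j) : rJ a m j = 0 := by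
  rw [rJ, Finset.card_eq_zero, Finset.filter_eq_empty_iff]
  exact fun i hi h => ((ha i (Finset.mem_range.mp hi)).trans_lt hj).ne h

lemma lamJ_eq_add {j : ℕ} (hj : 1 ≤ j) : lamJ a m k j = muJ a m k j + rJ a m j :=
  if_neg (Nat.one_le_iff_ne_zero.mp hj)

lemma lamJ_succ_eq_muJ {j : ℕ} (hj : 1 ≤ j) (hjk : j < k) :
    lamJ a m k (j + 1) = muJ a m k j := by
  rw [lamJ_eq_add (by omega), muJ, muJ, if_neg (by omega), if_neg (by omega),
    ← Finset.add_sum_Ioc_eq_sum_Icc (Nat.succ_le_of_lt hjk), add_comm,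
    Finset.Icc_add_one_left_eq_Ioc]

lemma isPartFun_lamJ (ha : ∀ i < m, a i ≤ k) : IsPartFun k (lamJ a m k) := by
  have lamJ_eq_zero : ∀ j, k < j → lamJ a m k j = 0 := fun j hj => by
    rw [lamJ_eq_add (by omega), rJ_eq_zero ha hj, muJ, if_neg (by omega),
      Finset.Icc_eq_empty (by omega), Finset.sum_empty]
  refine ⟨if_pos rfl, fun j hj => ?_, lamJ_eq_zero⟩
  obtain hjk | hjk := lt_or_ge j k
  · rw [lamJ_succ_eq_muJ hj hjk, lamJ_eq_add hj]
    exact Nat.le_add_right _ _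
  · rw [lamJ_eq_zero (j + 1) (by omega)]
    exact Nat.zero_le _

variable {N : ℕ} [NeZero N]

/-- The pairs `(a_i, b_i)` with `i < m`, last pair first, as read by `transpositionProd`. -/
def chain (N : ℕ) [NeZero N] (a b : ℕ → ℕ) : ℕ → List (Fin N × Fin N)
  | 0 => []
  | m + 1 => (pos N (a m), pos N (b m)) :: chain N a b m

lemma length_chain : (chain N a b m).length = m := by
  induction m with
  | zero => rfl
  | succ m ih => rw [chain, List.length_cons, ih]

lemma transpositionProd_chain : transpositionProd (chain N a b m) = tProd N a b m := by
  induction m with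
  | zero => rfl
  | succ m ih =>
    rw [chain, transpositionProd, ih, tProd, tProd, List.range_succ, List.map_append,
      List.prod_append, List.map_singleton, List.prod_singleton]
    rfl

lemma exists_eq_chain_of_suffix {L : List (Fin N × Fin N)} (hL : L <:+ chain N a b m) :
    ∃ i ≤ m, L = chain N a b i := by
  induction m with
  | zero => exact ⟨0, le_rfl, List.suffix_nil.mp hL⟩
  | succ m ih =>
    obtain rfl | hL := List.suffix_cons_iff.mp hL
    · exact ⟨m + 1, le_rfl, rfl⟩
    · obtain ⟨i, him, rfl⟩ := ih hL
      exact ⟨i, him.trans (Nat.le_succ m), rfl⟩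

lemma StepOK.len_mul_transpositionProd {w : Perm (Fin N)} (h : StepOK N k m w a b)
    {L : List (Fin N × Fin N)} (hL : L <:+ chain N a b m) :
    len (w * transpositionProd L) = len w + L.length := by
  obtain ⟨i, him, rfl⟩ := exists_eq_chain_of_suffix hL
  rw [transpositionProd_chain, length_chain, h.2 i him]

lemma mem_chain {x : Fin N × Fin N} :
    x ∈ chain N a b m ↔ ∃ i < m, (pos N (a i), pos N (b i)) = x := by
  induction m with
  | zero => simp [chain]
  | succ m ih => rw [chain, List.mem_cons, ih, Nat.exists_lt_succ_right, or_comm, eq_comm]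

lemma isPieriList_chain (hk : k ≤ N) (hab : ∀ i < m, 1 ≤ a i ∧ a i ≤ k ∧ k < b i ∧ b i ≤ N)
    (hb : ∀ i j, i < m → j < m → i ≠ j → b i ≠ b j) : IsPieriList k (chain N a b m) := by
  induction m with
  | zero => exact ⟨fun _ h => absurd h List.not_mem_nil, List.nodup_nil⟩
  | succ m ih =>
    obtain ⟨ha, hak, hkb, hbN⟩ := hab m m.lt_succ_self
    refine isPieriList_cons.mpr ⟨?_, ?_, ih (fun i hi => hab i (Nat.lt_succ_of_lt hi))
      fun i j hi hj => hb i j (Nat.lt_succ_of_lt hi) (Nat.lt_succ_of_lt hj)⟩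
    · rw [pos_eq_mk ha (hak.trans hk), pos_eq_mk (by omega) hbN]
      dsimp only
      omega
    · rw [List.mem_map]
      rintro ⟨x, hx, hxb⟩
      obtain ⟨i, him, rfl⟩ := mem_chain.mp hx
      have hbi := hab i (Nat.lt_succ_of_lt him)
      dsimp only at hxb
      rw [pos_eq_mk (by omega) hbi.2.2.2, pos_eq_mk (by omega) hbN, Fin.mk.injEq] at hxb
      exact hb i m (Nat.lt_succ_of_lt him) m.lt_succ_self him.ne (by omega)

lemma toFinsupp_map_fst_chain (hk : k ≤ N) (ha : ∀ i < m, 1 ≤ a i ∧ a i ≤ k) :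
    Multiset.toFinsupp ((chain N a b m).map Prod.fst : Multiset (Fin N)) =
      Finsupp.mapDomain (Fin.castLE hk)
        (Finsupp.equivFunOnFinite.symm fun i : Fin k => rJ a m (i + 1)) := by
  induction m with
  | zero =>
    have rJ_zero : (Finsupp.equivFunOnFinite.symm fun i : Fin k => rJ a 0 (i + 1)) = 0 :=
      Finsupp.ext fun _ => rfl
    rw [rJ_zero, Finsupp.mapDomain_zero]
    exact Multiset.toFinsupp_zero
  | succ m ih =>
    obtain ⟨ham, hamk⟩ := ha m m.lt_succ_self
    have rJ_succ_eq : (Finsupp.equivFunOnFinite.symm fun i : Fin k => rJ a (m + 1) (i + 1)) =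
        Finsupp.single ⟨a m - 1, by omega⟩ 1 +
          Finsupp.equivFunOnFinite.symm fun i : Fin k => rJ a m (i + 1) := by
      ext i
      rw [Finsupp.add_apply, Finsupp.single_apply, Finsupp.equivFunOnFinite_symm_apply_apply,
        Finsupp.equivFunOnFinite_symm_apply_apply, rJ_succ, add_comm]
      congr 2
      rw [Fin.ext_iff, eq_iff_iff]
      dsimp only
      omega
    rw [rJ_succ_eq, Finsupp.mapDomain_add, Finsupp.mapDomain_single,
      ← ih fun i hi => ha i (Nat.lt_succ_of_lt hi), chain, List.map_cons, ← Multiset.cons_coe,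
      ← Multiset.singleton_add, Multiset.toFinsupp_add, Multiset.toFinsupp_singleton,
      pos_eq_mk ham (hamk.trans hk)]
    rfl

end Chain

/-- If `w →_{r[k,m]} w'`, witnessed by `a`, `b`, then the structure constant
`c^{w'}_{w, w(ν)}` equals the Littlewood–Richardson coefficient `c^λ_{μ,ν}`,
where `r_j = #{i : aᵢ = j}`, `μ_j = r_{j+1}+⋯+r_k` and `λ_j = μ_j + r_j`.
The structure constants and Littlewood–Richardson coefficients are encoded by
their defining properties, the latter via the expansion of `s_μ · s_ν` in Schur
polynomials in `x₁,…,x_k` (here the paper's `n` is `n+1`). -/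
theorem structure_constant_eq_LR_row (n k m : ℕ) (hk : 1 ≤ k) (hkn : k ≤ n + 1)
    (hm : 1 ≤ m) (w w' : Equiv.Perm (Fin (n + 1))) (a b : ℕ → ℕ)
    (hstep : StepOK (n + 1) k m w a b) (hw' : w' = w * tProd (n + 1) a b m)
    (hb : ∀ i j, i < m → j < m → i ≠ j → b i ≠ b j)
    (nu : ℕ → ℕ) (hnu : IsPartFun k nu) (hnu1 : nu 1 ≤ n + 1 - k)
    (wnu : Equiv.Perm (Fin (n + 1))) (hwnu : IsGrassOf (n + 1) k nu wnu)
    (c : Equiv.Perm (Fin (n + 1)) → ℤ)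
    (hc : SS (n + 1) w * SS (n + 1) wnu = ∑ u, c u • SS (n + 1) u)
    (cLR : (ℕ → ℕ) → ℤ) (hfin : (Function.support cLR).Finite)
    (hsupp : ∀ lam, cLR lam ≠ 0 → IsPartFun k lam)
    (hLR : schurPoly (n + 1) k (muJ a m k) * schurPoly (n + 1) k nu =
      ∑ᶠ lam, cLR lam • schurPoly (n + 1) k lam) :
    c w' = cLR (lamJ a m k) := by
  have ha : ∀ i < m, 1 ≤ a i ∧ a i ≤ k := fun i hi => ⟨(hstep.1 i hi).1, (hstep.1 i hi).2.1⟩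
  have lr_eq := littlewoodRichardson_eq_coeff_schurPoly hkn
    (isPartFun_lamJ fun i hi => (ha i hi).2) (fun j hj => lamJ_eq_add hj ▸ Nat.le_add_right _ _)
    (fun j hj hjk => (lamJ_succ_eq_muJ hj hjk).le) hfin hsupp hLR
  calc c w' = schubertCoeff w' (schubertPoly (n + 1) wnu * schubertPoly (n + 1) w) :=
        coeff_eq_schubertCoeff (by rw [← hc, mul_comm, map_mul]; rfl) w'
    _ = schubertCoeff (w * transpositionProd (chain (n + 1) a b m))
          (schurPoly (n + 1) k nu * schubertPoly (n + 1) w) := by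
        rw [hw', transpositionProd_chain, hwnu.schubertPoly_eq_schurPoly hkn hnu]
    _ = coeff (Multiset.toFinsupp ((chain (n + 1) a b m).map Prod.fst : Multiset _))
          (schurPoly (n + 1) k nu) :=
        schubertCoeff_mul_schubertPoly (isPieriList_chain hkn hstep.1 hb)
          (fun _ => hstep.len_mul_transpositionProd) (schurPoly_mem_supported hkn nu)
    _ = coeff (Finsupp.equivFunOnFinite.symm fun i : Fin k => rJ a m (i + 1))
          (schurPoly k k nu) := by
        rw [toFinsupp_map_fst_chain hkn ha, ← rename_castLE_schurPoly hkn,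
          coeff_rename_mapDomain _ (Fin.castLE_injective hkn)]
    _ = cLR (lamJ a m k) := by
        simp only [lr_eq, lamJ_eq_add (Nat.le_add_left 1 _), Nat.add_sub_cancel_left]

end SchubertPieri
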